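/- arXiv:2505.10955 — 7 statements merged into one kernel-verified Lean document; each statement's English description precedes it below -/
import Mathlib

section
/- Let f : [0,1] → ℝ be continuous. Then for every x ∈ [0,1] one has the Faber representation f(x) = f(0)·(1 − x) + f(1)·x − (1/2) Σ_{j=0}^{∞} Σ_{k=0}^{2^j − 1} Δ²_{2^{−j−1}} f(2^{−j} k) · v_{j,k}(x), in the sense that the partial sums S_J(x) = f(0)(1 − x) + f(1)x − (1/2) Σ_{j=0}^{J−1} Σ_{k=0}^{2^j − 1} Δ²_{2^{−j−1}} f(2^{−j} k) v_{j,k}(x) converge to f(x) as J → ∞. -/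
open scoped BigOperators ENNReal

/-- Second order difference operator: `Δ²_h f(t) = f(t+2h) − 2f(t+h) + f(t)`. -/
noncomputable def delta2 (f : ℝ → ℝ) (h t : ℝ) : ℝ := f (t + 2*h) - 2 * f (t + h) + f t

/-- The Faber hat function `v_{j,k}` for level `j ≥ 0`. -/
noncomputable def hatFn (j k : ℤ) (x : ℝ) : ℝ :=
  if (2:ℝ)^(-j) * (k:ℝ) ≤ x ∧ x ≤ (2:ℝ)^(-j) * ((k:ℝ) + 1/2) then
    (2:ℝ)^(j+1) * (x - (2:ℝ)^(-j) * (k:ℝ))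
  else if (2:ℝ)^(-j) * ((k:ℝ) + 1/2) ≤ x ∧ x ≤ (2:ℝ)^(-j) * ((k:ℝ) + 1) then
    (2:ℝ)^(j+1) * ((2:ℝ)^(-j) * ((k:ℝ) + 1) - x)
  else 0

/-- The Faber hat function `v_{j,k}`, including the level `j = −1`
(`v_{−1,k}(x) = max(1 − |x − k|, 0)`). -/
noncomputable def faberV (j k : ℤ) (x : ℝ) : ℝ :=
  if j = -1 then max (1 - |x - (k:ℝ)|) 0 else hatFn j k x

/-!
The partial sum `S_J` is the piecewise linear interpolant of `f` on the grid `2⁻ᴶℤ`. Refining such a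
grid by midpoints changes the interpolant on each cell by a hat whose height is the interpolation
error at the midpoint, and this error is `-1/2` times the second difference of `f` on the cell. At
`x` the interpolant is a convex combination of the values of `f` at the two neighbouring nodes,
both of which tend to `x` from within `[0, 1]`.
-/

noncomputable section

/-- The hat function `v_{0,0}`, supported on `[0, 1]` with peak `1` at `1/2`; every `v_{j,k}` is a
dilate and translate of it. -/
def tent (t : ℝ) : ℝ := max 0 (1 - |2 * t - 1|)

lemma tent_of_nonpos {t : ℝ} (ht : t ≤ 0) : tent t = 0 :=
  max_eq_left (by rw [abs_of_nonpos] <;> linarith)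

lemma tent_of_one_le {t : ℝ} (ht : 1 ≤ t) : tent t = 0 :=
  max_eq_left (by rw [abs_of_nonneg] <;> linarith)

lemma tent_of_mem_Icc_zero_half {t : ℝ} (ht : t ∈ Set.Icc 0 (1 / 2)) : tent t = 2 * t := by
  obtain ⟨ht₀, ht₁⟩ := ht
  rw [tent, abs_of_nonpos (by linarith), max_eq_right (by linarith)]
  ring

lemma tent_of_mem_Icc_half_one {t : ℝ} (ht : t ∈ Set.Icc (1 / 2) 1) : tent t = 2 * (1 - t) := by
  obtain ⟨ht₀, ht₁⟩ := ht
  rw [tent, abs_of_nonneg (by linarith), max_eq_right (by linarith)]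
  ring

lemma hatFn_eq_tent (j k : ℤ) (x : ℝ) : hatFn j k x = tent (2 ^ j * x - k) := by
  have hpos : (0 : ℝ) < 2 ^ j := by positivity
  have le_iff (a : ℝ) : (2 : ℝ) ^ (-j) * a ≤ x ↔ a ≤ 2 ^ j * x := by
    rw [zpow_neg, inv_mul_le_iff₀ hpos]
  have ge_iff (a : ℝ) : x ≤ (2 : ℝ) ^ (-j) * a ↔ 2 ^ j * x ≤ a := by
    rw [zpow_neg, le_inv_mul_iff₀ hpos]
  have scale (a : ℝ) : (2 : ℝ) ^ (j + 1) * ((2 : ℝ) ^ (-j) * a) = 2 * a := by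
    rw [zpow_add_one₀ two_ne_zero, zpow_neg]
    field_simp
  simp only [hatFn, le_iff, ge_iff, mul_sub, scale]
  rw [zpow_add_one₀ two_ne_zero]
  split_ifs with hleft hright
  · rw [tent_of_mem_Icc_zero_half ⟨by linarith, by linarith⟩]
    ring
  · rw [tent_of_mem_Icc_half_one ⟨by linarith, by linarith⟩]
    ring
  · rcases le_total (2 ^ j * x) (k + 1 / 2) with hx | hx
    · have lt_left_end : 2 ^ j * x < k := by
        by_contra! h
        exact hleft ⟨h, hx⟩
      exact (tent_of_nonpos (by linarith)).symm
    · have right_end_lt : (k : ℝ) + 1 < 2 ^ j * x := by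
        by_contra! h
        exact hright ⟨hx, h⟩
      exact (tent_of_one_le (by linarith)).symm

/-- The continuous piecewise linear interpolant of `f` with nodes `k / N`, `k ∈ ℕ`, on the half-line
`0 ≤ x`. The right node is taken as a ceiling rather than as floor plus one so that both nodes
stay in `[0, 1]` when `x` does, including `x = 1`. -/
def gridInterpolant (f : ℝ → ℝ) (N : ℕ) (x : ℝ) : ℝ :=
  (1 - (N * x - ⌊N * x⌋₊)) * f (⌊N * x⌋₊ / N) + (N * x - ⌊N * x⌋₊) * f (⌈N * x⌉₊ / N)

variable {f : ℝ → ℝ} {x : ℝ}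

lemma gridInterpolant_eq_of_mem_Icc {N m : ℕ} (hm : N * x ∈ Set.Icc (m : ℝ) (m + 1)) :
    gridInterpolant f N x =
      (1 - (N * x - m)) * f (m / N) + (N * x - m) * f ((m + 1) / N) := by
  obtain ⟨hm₀, hm₁⟩ := hm
  unfold gridInterpolant
  generalize N * x = y at *
  rcases hm₁.eq_or_lt with rfl | hy
  · have floor_eq : ⌊(m : ℝ) + 1⌋₊ = m + 1 := by exact_mod_cast Nat.floor_natCast (m + 1)
    simp [floor_eq]
  rcases hm₀.eq_or_lt with rfl | hy'
  · simp
  have floor_eq : ⌊y⌋₊ = m := Nat.floor_eq_on_Ico m y ⟨hm₀, hy⟩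
  have ceil_eq : ⌈y⌉₊ = m + 1 := (Nat.ceil_eq_iff m.succ_ne_zero).mpr ⟨by simpa, by simpa⟩
  simp [floor_eq, ceil_eq]

lemma gridInterpolant_two_mul {N m : ℕ} (hN : N ≠ 0) (hm : N * x ∈ Set.Icc (m : ℝ) (m + 1)) :
    gridInterpolant f (2 * N) x =
      gridInterpolant f N x - 1 / 2 * (delta2 f (1 / (2 * N)) (m / N) * tent (N * x - m)) := by
  have left_node : ((2 * m : ℕ) : ℝ) / (2 * N : ℕ) = m / N := by push_cast; field_simp
  have mid_node : (2 * m + 1 : ℝ) / (2 * N : ℕ) = m / N + 1 / (2 * N) := by push_cast; field_simp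
  have right_node : (2 * m + 1 + 1 : ℝ) / (2 * N : ℕ) = (m + 1) / N := by
    push_cast; field_simp; ring
  have right_node' : (m / N + 2 * (1 / (2 * N)) : ℝ) = (m + 1) / N := by field_simp
  rw [gridInterpolant_eq_of_mem_Icc hm, delta2, right_node']
  obtain ⟨hm₀, hm₁⟩ := hm
  rcases le_total (N * x) (m + 1 / 2) with hx | hx
  · have cell : ((2 * N : ℕ) : ℝ) * x ∈ Set.Icc ((2 * m : ℕ) : ℝ) ((2 * m : ℕ) + 1) := by
      push_cast; constructor <;> linarith
    rw [gridInterpolant_eq_of_mem_Icc cell, tent_of_mem_Icc_zero_half ⟨by linarith, by linarith⟩,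
      left_node, Nat.cast_mul 2 m, Nat.cast_two, mid_node]
    push_cast
    ring
  · have cell : ((2 * N : ℕ) : ℝ) * x ∈ Set.Icc ((2 * m + 1 : ℕ) : ℝ) ((2 * m + 1 : ℕ) + 1) := by
      push_cast; constructor <;> linarith
    rw [gridInterpolant_eq_of_mem_Icc cell, tent_of_mem_Icc_half_one ⟨by linarith, by linarith⟩,
      Nat.cast_add_one, Nat.cast_mul 2 m, Nat.cast_two, mid_node, right_node]
    push_cast
    ring

lemma sum_mul_hatFn_eq_floor (c : ℕ → ℝ) (j : ℕ) (hx : x ∈ Set.Icc (0 : ℝ) 1) :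
    ∑ k ∈ Finset.range (2 ^ j), c k * hatFn j k x =
      c ⌊2 ^ j * x⌋₊ * tent (2 ^ j * x - ⌊2 ^ j * x⌋₊) := by
  have hy : 0 ≤ 2 ^ j * x := mul_nonneg (by positivity) hx.1
  simp only [hatFn_eq_tent, zpow_natCast, Int.cast_natCast]
  refine Finset.sum_eq_single _ (fun k _ hk ↦ mul_eq_zero_of_right _ ?_)
    fun hfloor ↦ mul_eq_zero_of_right _ (tent_of_nonpos ?_)
  · rcases hk.lt_or_gt with hlt | hgt
    · have right_end_le : ((k + 1 : ℕ) : ℝ) ≤ 2 ^ j * x := (Nat.le_floor_iff hy).mp hlt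
      push_cast at right_end_le
      exact tent_of_one_le (by linarith)
    · have lt_left_end : 2 ^ j * x < k := (Nat.floor_lt hy).mp hgt
      exact tent_of_nonpos (by linarith)
  · have end_le_floor : (2 : ℝ) ^ j ≤ ⌊2 ^ j * x⌋₊ := by
      exact_mod_cast not_lt.mp (mt Finset.mem_range.mpr hfloor)
    have scaled_le_end : (2 : ℝ) ^ j * x ≤ 2 ^ j := mul_le_of_le_one_right (by positivity) hx.2
    linarith

/-- The partial sum `S_J(x)` of the Faber series of `f`. -/
def faberPartialSum (f : ℝ → ℝ) (x : ℝ) (J : ℕ) : ℝ :=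
  f 0 * (1 - x) + f 1 * x -
    (1 / 2) * ∑ j ∈ Finset.range J, ∑ k ∈ Finset.range (2 ^ j),
      delta2 f ((2 : ℝ) ^ (-(j : ℤ) - 1)) ((2 : ℝ) ^ (-(j : ℤ)) * (k : ℝ)) *
        hatFn (j : ℤ) (k : ℤ) x

lemma faberPartialSum_eq_gridInterpolant (f : ℝ → ℝ) (hx : x ∈ Set.Icc (0 : ℝ) 1) (J : ℕ) :
    faberPartialSum f x J = gridInterpolant f (2 ^ J) x := by
  induction J with
  | zero =>
    have cell : ((2 ^ 0 : ℕ) : ℝ) * x ∈ Set.Icc ((0 : ℕ) : ℝ) ((0 : ℕ) + 1) := by simpa using hx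
    rw [gridInterpolant_eq_of_mem_Icc cell]
    simp [faberPartialSum, mul_comm]
  | succ J ih =>
    have cell : ((2 ^ J : ℕ) : ℝ) * x ∈ Set.Icc (⌊2 ^ J * x⌋₊ : ℝ) (⌊2 ^ J * x⌋₊ + 1) := by
      push_cast
      exact ⟨Nat.floor_le (mul_nonneg (by positivity) hx.1), (Nat.lt_floor_add_one _).le⟩
    have step_eq : (2 : ℝ) ^ (-(J : ℤ) - 1) = 1 / (2 * (2 ^ J : ℕ)) := by
      rw [zpow_sub_one₀ two_ne_zero, zpow_neg, zpow_natCast]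
      push_cast
      field_simp
    have node_eq (k : ℕ) : (2 : ℝ) ^ (-(J : ℤ)) * k = k / (2 ^ J : ℕ) := by
      rw [zpow_neg, zpow_natCast, Nat.cast_pow, Nat.cast_two, inv_mul_eq_div]
    rw [faberPartialSum, Finset.sum_range_succ, mul_add, ← sub_sub, ← faberPartialSum, ih,
      sum_mul_hatFn_eq_floor _ _ hx, pow_succ' 2 J, gridInterpolant_two_mul (by positivity) cell,
      step_eq, node_eq]
    push_cast
    rfl

lemma tendsto_gridInterpolant (hx : x ∈ Set.Icc (0 : ℝ) 1)
    (hf : ContinuousWithinAt f (Set.Icc 0 1) x) :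
    Filter.Tendsto (fun N ↦ gridInterpolant f N x) Filter.atTop (nhds (f x)) := by
  have scaled_le (N : ℕ) : (N : ℝ) * x ≤ N := mul_le_of_le_one_right N.cast_nonneg hx.2
  have scaled_nonneg (N : ℕ) : 0 ≤ (N : ℝ) * x := mul_nonneg N.cast_nonneg hx.1
  have left : Filter.Tendsto (fun N : ℕ ↦ f (⌊N * x⌋₊ / N)) Filter.atTop (nhds (f x)) := by
    refine hf.tendsto.comp (tendsto_nhdsWithin_iff.mpr ⟨?_, .of_forall fun N ↦ ⟨by positivity, ?_⟩⟩)
    · simpa only [mul_comm, Function.comp_def] using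
        (tendsto_nat_floor_mul_div_atTop hx.1).comp tendsto_natCast_atTop_atTop
    · exact div_le_one_of_le₀ ((Nat.floor_le (scaled_nonneg N)).trans (scaled_le N)) N.cast_nonneg
  have right : Filter.Tendsto (fun N : ℕ ↦ f (⌈N * x⌉₊ / N)) Filter.atTop (nhds (f x)) := by
    refine hf.tendsto.comp (tendsto_nhdsWithin_iff.mpr ⟨?_, .of_forall fun N ↦ ⟨by positivity, ?_⟩⟩)
    · simpa only [mul_comm, Function.comp_def] using
        (tendsto_nat_ceil_mul_div_atTop hx.1).comp tendsto_natCast_atTop_atTop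
    · exact div_le_one_of_le₀ (mod_cast Nat.ceil_le.mpr (scaled_le N)) N.cast_nonneg
  have weight_nonneg (N : ℕ) : 0 ≤ N * x - ⌊N * x⌋₊ :=
    sub_nonneg.mpr (Nat.floor_le (scaled_nonneg N))
  have one_sub_weight_nonneg (N : ℕ) : 0 ≤ 1 - (N * x - ⌊N * x⌋₊) := by
    linarith [Nat.lt_floor_add_one (N * x)]
  refine tendsto_of_tendsto_of_tendsto_of_le_of_le (by simpa using left.min right)
    (by simpa using left.max right) (fun N ↦ ?_) fun N ↦ ?_
  · exact Convex.min_le_combo _ _ (one_sub_weight_nonneg N) (weight_nonneg N) (sub_add_cancel _ _)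
  · exact Convex.combo_le_max _ _ (one_sub_weight_nonneg N) (weight_nonneg N) (sub_add_cancel _ _)

theorem faber_representation_general (f : ℝ → ℝ) (x : ℝ) (hx : x ∈ Set.Icc (0 : ℝ) 1)
    (hf : ContinuousWithinAt f (Set.Icc 0 1) x) :
    Filter.Tendsto (faberPartialSum f x) Filter.atTop (nhds (f x)) := by
  rw [funext (faberPartialSum_eq_gridInterpolant f hx)]
  exact (tendsto_gridInterpolant hx hf).comp (tendsto_pow_atTop_atTop_of_one_lt one_lt_two)

end

/-- Faber representation: for continuous `f : [0,1] → ℝ` and `x ∈ [0,1]`,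
the partial sums `S_J(x) = f(0)(1−x) + f(1)x − (1/2) Σ_{j<J} Σ_{k<2^j}
Δ²_{2^{−j−1}} f(2^{−j}k) · v_{j,k}(x)` converge to `f(x)` as `J → ∞`. -/
theorem faber_representation (f : ℝ → ℝ) (hf : ContinuousOn f (Set.Icc 0 1))
    (x : ℝ) (hx : x ∈ Set.Icc (0:ℝ) 1) :
    Filter.Tendsto
      (fun J : ℕ => f 0 * (1 - x) + f 1 * x -
        (1/2) * ∑ j ∈ Finset.range J, ∑ k ∈ Finset.range (2^j),
          delta2 f ((2:ℝ)^(-(j:ℤ)-1)) ((2:ℝ)^(-(j:ℤ)) * (k:ℝ)) * hatFn (j:ℤ) (k:ℤ) x)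
      Filter.atTop (nhds (f x)) :=
  faber_representation_general f x hx (hf x hx)
end

section
/- Let g : ℝ → ℝ be twice continuously differentiable with g'' square-integrable on ℝ. Then for every j ∈ ℕ₀, Σ_{k∈ℤ} |Δ²_{2^{−j−1}} g(2^{−j} k)|² ≤ 2^{−3j} ∫_ℝ g''(t)² dt. -/
open scoped BigOperators ENNReal

/-! On `[a, b]` Taylor's formula with integral remainder and the Cauchy-Schwarz inequality give
`‖f b - f a - (b - a) f' a‖² ≤ |b - a|³ / 3 * ∫ ‖f''‖²`. The second difference on `[t, t + 2h]` is
the sum of two such remainders, both expanded at the midpoint `t + h`. Since `(x + y)²` is at most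
`2 (x² + y²)`, its square is at most `2 h³ / 3` times the integral of `‖f''‖²` over `[t, t + 2h]`,
and the intervals belonging to a grid of mesh `2h` do not overlap. -/

open MeasureTheory Set
open scoped Interval

section SquareIntegrals

variable {α : Type*} [MeasurableSpace α] {μ : Measure α}

theorem lintegral_mul_sq_le {f g : α → ℝ≥0∞} (hf : AEMeasurable f μ) (hg : AEMeasurable g μ) :
    (∫⁻ x, f x * g x ∂μ) ^ 2 ≤ (∫⁻ x, f x ^ 2 ∂μ) * ∫⁻ x, g x ^ 2 ∂μ := by
  have holder := ENNReal.lintegral_mul_le_Lp_mul_Lq μ Real.HolderConjugate.two_two hf hg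
  have sq_sqrt (c : ℝ≥0∞) : (c ^ (1 / 2 : ℝ)) ^ 2 = c := by
    rw [← ENNReal.rpow_natCast, ← ENNReal.rpow_mul]
    norm_num
  calc (∫⁻ x, f x * g x ∂μ) ^ 2
      ≤ ((∫⁻ x, f x ^ (2 : ℝ) ∂μ) ^ (1 / 2 : ℝ) * (∫⁻ x, g x ^ (2 : ℝ) ∂μ) ^ (1 / 2 : ℝ)) ^ 2 :=
        pow_le_pow_left' holder 2
    _ = (∫⁻ x, f x ^ 2 ∂μ) * ∫⁻ x, g x ^ 2 ∂μ := by
        simp only [mul_pow, sq_sqrt, ENNReal.rpow_two]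

theorem enorm_integral_smul_sq_le {𝕜 E : Type*} [NormedField 𝕜] [NormedAddCommGroup E]
    [NormedSpace ℝ E] [NormedSpace 𝕜 E] {φ : α → 𝕜} {F : α → E} (hφ : AEStronglyMeasurable φ μ)
    (hF : AEStronglyMeasurable F μ) :
    ‖∫ x, φ x • F x ∂μ‖ₑ ^ 2 ≤ (∫⁻ x, ‖φ x‖ₑ ^ 2 ∂μ) * ∫⁻ x, ‖F x‖ₑ ^ 2 ∂μ :=
  calc ‖∫ x, φ x • F x ∂μ‖ₑ ^ 2
      ≤ (∫⁻ x, ‖φ x‖ₑ * ‖F x‖ₑ ∂μ) ^ 2 := by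
        simp only [← enorm_smul]
        exact pow_le_pow_left' (enorm_integral_le_lintegral_enorm _) 2
    _ ≤ (∫⁻ x, ‖φ x‖ₑ ^ 2 ∂μ) * ∫⁻ x, ‖F x‖ₑ ^ 2 ∂μ := lintegral_mul_sq_le hφ.enorm hF.enorm

theorem integrable_of_lintegral_enorm_sq_ne_top {E : Type*} [IsFiniteMeasure μ]
    [NormedAddCommGroup E] {F : α → E} (hF : AEStronglyMeasurable F μ)
    (hfin : ∫⁻ x, ‖F x‖ₑ ^ 2 ∂μ ≠ ∞) : Integrable F μ := by
  have hF2 : MemLp F 2 μ :=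
    ⟨hF, (eLpNorm_lt_top_iff_lintegral_rpow_enorm_lt_top two_ne_zero ENNReal.ofNat_ne_top).2 <| by
      simpa using hfin.lt_top⟩
  exact hF2.integrable one_le_two

end SquareIntegrals

theorem lintegral_uIoc_enorm_sub_sq (a b : ℝ) :
    ∫⁻ s in Ι a b, ‖b - s‖ₑ ^ 2 = ENNReal.ofReal (|b - a| ^ 3 / 3) := by
  have hint : IntegrableOn (fun s ↦ (b - s) ^ 2) (Ι a b) :=
    ((by fun_prop : Continuous fun s : ℝ ↦ (b - s) ^ 2).intervalIntegrable a b).def'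
  have hnonneg : 0 ≤ ∫ s in Ι a b, (b - s) ^ 2 := integral_nonneg fun s ↦ sq_nonneg (b - s)
  have hval : ∫ s in Ι a b, (b - s) ^ 2 = |b - a| ^ 3 / 3 := by
    rw [← abs_of_nonneg hnonneg, ← intervalIntegral.abs_integral_eq_abs_integral_uIoc,
      intervalIntegral.integral_comp_sub_left (fun u ↦ u ^ 2), integral_pow]
    norm_num [abs_div]
  rw [← hval, ofReal_integral_eq_lintegral_ofReal hint (ae_of_all _ fun s ↦ sq_nonneg (b - s))]
  simp only [← enorm_pow, Real.enorm_of_nonneg (sq_nonneg _)]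

theorem enorm_add_sq_le {E : Type*} [TopologicalSpace E] [ESeminormedAddMonoid E] (x y : E) :
    ‖x + y‖ₑ ^ 2 ≤ 2 * (‖x‖ₑ ^ 2 + ‖y‖ₑ ^ 2) :=
  calc ‖x + y‖ₑ ^ 2
      ≤ (‖x‖ₑ + ‖y‖ₑ) ^ 2 := pow_le_pow_left' (enorm_add_le x y) 2
    _ ≤ 2 * (‖x‖ₑ ^ 2 + ‖y‖ₑ ^ 2) := by
        simpa [show (2 : ℝ) - 1 = 1 by norm_num] using
          ENNReal.rpow_add_le_mul_rpow_add_rpow ‖x‖ₑ ‖y‖ₑ one_le_two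

section Taylor

variable {E : Type*} [NormedAddCommGroup E] [NormedSpace ℝ E] [CompleteSpace E]
  {f f' f'' : ℝ → E}

theorem taylor_one_remainder_eq_integral {a b : ℝ} (hf : ∀ s ∈ [[a, b]], HasDerivAt f (f' s) s)
    (hf' : ∀ s ∈ [[a, b]], HasDerivAt f' (f'' s) s) (hint : IntervalIntegrable f'' volume a b) :
    f b - f a - (b - a) • f' a = ∫ s in a..b, (b - s) • f'' s := by
  have hprim : ∀ s ∈ [[a, b]], HasDerivAt (fun s ↦ f s + (b - s) • f' s) ((b - s) • f'' s) s := by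
    intro s hs
    refine ((hf s hs).fun_add (((hasDerivAt_id' s).const_sub b).fun_smul (hf' s hs))).congr_deriv ?_
    rw [neg_one_smul]
    abel
  rw [intervalIntegral.integral_eq_sub_of_hasDerivAt hprim
    (hint.continuousOn_smul (by fun_prop))]
  simp [sub_sub]

theorem enorm_taylor_one_remainder_sq_le {a b : ℝ} (hf : ∀ s ∈ [[a, b]], HasDerivAt f (f' s) s)
    (hf' : ∀ s ∈ [[a, b]], HasDerivAt f' (f'' s) s) :
    ‖f b - f a - (b - a) • f' a‖ₑ ^ 2 ≤
      ENNReal.ofReal (|b - a| ^ 3 / 3) * ∫⁻ s in Ι a b, ‖f'' s‖ₑ ^ 2 := by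
  rcases eq_or_ne a b with rfl | hab
  · simp
  -- A derivative need not be locally integrable, but the right-hand side is then infinite.
  rcases eq_or_ne (∫⁻ s in Ι a b, ‖f'' s‖ₑ ^ 2) ∞ with htop | hfin
  · have hpos : 0 < |b - a| ^ 3 / 3 := by
      have := abs_pos.2 (sub_ne_zero.2 hab.symm)
      positivity
    simp [htop, ENNReal.mul_top, hpos]
  have hmeas : AEStronglyMeasurable f'' (volume.restrict (Ι a b)) :=
    (aestronglyMeasurable_deriv f' _).congr <| ae_restrict_of_forall_mem measurableSet_uIoc
      fun s hs ↦ (hf' s (uIoc_subset_uIcc hs)).deriv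
  have : IsFiniteMeasure (volume.restrict (Ι a b)) := Real.isFiniteMeasure_restrict_Ioc _ _
  have hint : IntervalIntegrable f'' volume a b :=
    intervalIntegrable_iff.2 (integrable_of_lintegral_enorm_sq_ne_top hmeas hfin)
  calc ‖f b - f a - (b - a) • f' a‖ₑ ^ 2
      = ‖∫ s in Ι a b, (b - s) • f'' s‖ₑ ^ 2 := by
        rw [taylor_one_remainder_eq_integral hf hf' hint, ← enorm_norm,
          intervalIntegral.norm_integral_eq_norm_integral_uIoc, enorm_norm]
    _ ≤ (∫⁻ s in Ι a b, ‖b - s‖ₑ ^ 2) * ∫⁻ s in Ι a b, ‖f'' s‖ₑ ^ 2 :=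
        enorm_integral_smul_sq_le (by fun_prop) hmeas
    _ = ENNReal.ofReal (|b - a| ^ 3 / 3) * ∫⁻ s in Ι a b, ‖f'' s‖ₑ ^ 2 := by
        rw [lintegral_uIoc_enorm_sub_sq]

theorem fwdDiff_iter_two_apply {M G : Type*} [AddCommMonoid M] [AddCommGroup G] (h : M)
    (f : M → G) (t : M) : (fwdDiff h)^[2] f t = f (t + h + h) - f (t + h) - (f (t + h) - f t) := rfl

theorem enorm_fwdDiff_iter_two_sq_le {h t : ℝ} (hh : 0 ≤ h)
    (hf : ∀ s ∈ Icc t (t + 2 * h), HasDerivAt f (f' s) s)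
    (hf' : ∀ s ∈ Icc t (t + 2 * h), HasDerivAt f' (f'' s) s) :
    ‖(fwdDiff h)^[2] f t‖ₑ ^ 2 ≤
      ENNReal.ofReal (2 / 3 * h ^ 3) * ∫⁻ s in Ioc t (t + 2 * h), ‖f'' s‖ₑ ^ 2 := by
  have hsub {b : ℝ} (hb : b ∈ Icc t (t + 2 * h)) : [[t + h, b]] ⊆ Icc t (t + 2 * h) :=
    uIcc_subset_Icc ⟨by linarith, by linarith⟩ hb
  have hbound {b : ℝ} (hb : b ∈ Icc t (t + 2 * h)) :=
    enorm_taylor_one_remainder_sq_le (fun s hs ↦ hf s (hsub hb hs)) fun s hs ↦ hf' s (hsub hb hs)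
  have hright := hbound (b := t + 2 * h) ⟨by linarith, le_rfl⟩
  have hleft := hbound (b := t) ⟨le_rfl, by linarith⟩
  rw [add_sub_add_left_eq_sub, two_mul, add_sub_cancel_right, abs_of_nonneg hh, ← two_mul,
    uIoc_of_le (by linarith)] at hright
  rw [sub_add_cancel_left, abs_neg, abs_of_nonneg hh, uIoc_of_ge (by linarith)] at hleft
  set Rright := f (t + 2 * h) - f (t + h) - h • f' (t + h) with hRright
  set Rleft := f t - f (t + h) - (-h) • f' (t + h) with hRleft
  have hdiff : (fwdDiff h)^[2] f t = Rright + Rleft := by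
    rw [fwdDiff_iter_two_apply, hRright, hRleft, add_assoc t h h, ← two_mul, neg_smul]
    abel
  have hunion : Ioc t (t + 2 * h) = Ioc (t + h) (t + 2 * h) ∪ Ioc t (t + h) := by
    rw [union_comm, Ioc_union_Ioc_eq_Ioc (by linarith) (by linarith)]
  calc ‖(fwdDiff h)^[2] f t‖ₑ ^ 2
      ≤ 2 * (‖Rright‖ₑ ^ 2 + ‖Rleft‖ₑ ^ 2) := hdiff ▸ enorm_add_sq_le _ _
    _ ≤ 2 * (ENNReal.ofReal (h ^ 3 / 3) * (∫⁻ s in Ioc (t + h) (t + 2 * h), ‖f'' s‖ₑ ^ 2) +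
          ENNReal.ofReal (h ^ 3 / 3) * ∫⁻ s in Ioc t (t + h), ‖f'' s‖ₑ ^ 2) := by
        gcongr
    _ = ENNReal.ofReal (2 / 3 * h ^ 3) * ∫⁻ s in Ioc t (t + 2 * h), ‖f'' s‖ₑ ^ 2 := by
        rw [hunion, lintegral_union measurableSet_Ioc (Ioc_disjoint_Ioc_of_le le_rfl).symm,
          ← mul_add, ← mul_assoc, ← ENNReal.ofReal_ofNat, ← ENNReal.ofReal_mul zero_le_two,
          mul_div_left_comm, mul_comm (h ^ 3)]

theorem sum_sq_delta2_le_general (hf : ∀ s, HasDerivAt f (f' s) s)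
    (hf' : ∀ s, HasDerivAt f' (f'' s) s) {h : ℝ} (hh : 0 ≤ h) (a : ℝ) :
    ∑' k : ℤ, ‖(fwdDiff h)^[2] f (a + k • (2 * h))‖ₑ ^ 2 ≤
      ENNReal.ofReal (2 / 3 * h ^ 3) * ∫⁻ s, ‖f'' s‖ₑ ^ 2 := by
  have hcell (k : ℤ) : ‖(fwdDiff h)^[2] f (a + k • (2 * h))‖ₑ ^ 2 ≤ ENNReal.ofReal (2 / 3 * h ^ 3) *
      ∫⁻ s in Ioc (a + k • (2 * h)) (a + (k + 1) • (2 * h)), ‖f'' s‖ₑ ^ 2 := by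
    rw [add_one_zsmul, ← add_assoc]
    exact enorm_fwdDiff_iter_two_sq_le hh (fun s _ ↦ hf s) fun s _ ↦ hf' s
  calc ∑' k : ℤ, ‖(fwdDiff h)^[2] f (a + k • (2 * h))‖ₑ ^ 2
      ≤ ENNReal.ofReal (2 / 3 * h ^ 3) *
          ∑' k : ℤ, ∫⁻ s in Ioc (a + k • (2 * h)) (a + (k + 1) • (2 * h)), ‖f'' s‖ₑ ^ 2 := by
        rw [← ENNReal.tsum_mul_left]
        exact ENNReal.tsum_le_tsum hcell
    _ ≤ ENNReal.ofReal (2 / 3 * h ^ 3) * ∫⁻ s, ‖f'' s‖ₑ ^ 2 := by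
        rw [← lintegral_iUnion (fun _ ↦ measurableSet_Ioc)
          (pairwise_disjoint_Ioc_add_zsmul a (2 * h))]
        exact mul_le_mul_right (setLIntegral_le_lintegral _ _) _

end Taylor

theorem delta2_eq_fwdDiff_iter (f : ℝ → ℝ) (h t : ℝ) : delta2 f h t = (fwdDiff h)^[2] f t := by
  rw [fwdDiff_iter_two_apply, delta2, two_mul, ← add_assoc]
  ring

theorem ofReal_sq_eq_enorm_sq (x : ℝ) : ENNReal.ofReal (x ^ 2) = ‖x‖ₑ ^ 2 := by
  rw [← enorm_pow, Real.enorm_of_nonneg (sq_nonneg x)]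

theorem tsum_ofReal_delta2_half_sq_le {g g' g'' : ℝ → ℝ} (hg : ∀ s, HasDerivAt g (g' s) s)
    (hg' : ∀ s, HasDerivAt g' (g'' s) s) (hint : Integrable fun s ↦ g'' s ^ 2) {d : ℝ}
    (hd : 0 ≤ d) :
    ∑' k : ℤ, ENNReal.ofReal ((delta2 g (d / 2) (d * k)) ^ 2) ≤
      ENNReal.ofReal (d ^ 3 / 12 * ∫ s, g'' s ^ 2) := by
  have hgrid (k : ℤ) : d * k = 0 + k • (2 * (d / 2)) := by
    rw [zsmul_eq_mul]
    ring
  calc ∑' k : ℤ, ENNReal.ofReal ((delta2 g (d / 2) (d * k)) ^ 2)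
      = ∑' k : ℤ, ‖(fwdDiff (d / 2))^[2] g (0 + k • (2 * (d / 2)))‖ₑ ^ 2 := by
        simp only [ofReal_sq_eq_enorm_sq, delta2_eq_fwdDiff_iter, hgrid]
    _ ≤ ENNReal.ofReal (2 / 3 * (d / 2) ^ 3) * ∫⁻ s, ‖g'' s‖ₑ ^ 2 :=
        sum_sq_delta2_le_general hg hg' (by positivity) 0
    _ = ENNReal.ofReal (d ^ 3 / 12 * ∫ s, g'' s ^ 2) := by
        simp only [← ofReal_sq_eq_enorm_sq]
        rw [← ofReal_integral_eq_lintegral_ofReal hint (ae_of_all _ fun s ↦ sq_nonneg _),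
          ← ENNReal.ofReal_mul (by positivity)]
        ring_nf

theorem hasDerivAt_iteratedDeriv {𝕜 F : Type*} [NontriviallyNormedField 𝕜] [NormedAddCommGroup F]
    [NormedSpace 𝕜 F] {f : 𝕜 → F} {m : WithTop ℕ∞} {n : ℕ} (hf : ContDiff 𝕜 m f) (hnm : n < m)
    (x : 𝕜) : HasDerivAt (iteratedDeriv n f) (iteratedDeriv (n + 1) f x) x := by
  rw [iteratedDeriv_succ]
  exact (hf.differentiable_iteratedDeriv n hnm x).hasDerivAt

/-- for `g ∈ C²(ℝ)` with `g''` square-integrable and `j ∈ ℕ₀`,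
`Σ_{k∈ℤ} |Δ²_{2^{−j−1}} g(2^{−j}k)|² ≤ 2^{−3j} ∫_ℝ g''(t)² dt`
(the left-hand side is taken in `[0,∞]`, so the inequality includes summability). -/
theorem sum_sq_delta2_le (g : ℝ → ℝ) (hg : ContDiff ℝ 2 g)
    (hg2 : MeasureTheory.Integrable (fun t => (iteratedDeriv 2 g t)^2)) (j : ℕ) :
    ∑' k : ℤ, ENNReal.ofReal ((delta2 g ((2:ℝ)^(-(j:ℤ)-1)) ((2:ℝ)^(-(j:ℤ)) * (k:ℝ)))^2)
      ≤ ENNReal.ofReal ((2:ℝ)^(-(3*(j:ℤ))) * ∫ t : ℝ, (iteratedDeriv 2 g t)^2) := by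
  have hderiv (t : ℝ) : HasDerivAt g (iteratedDeriv 1 g t) t := by
    simpa using hasDerivAt_iteratedDeriv (n := 0) hg (by norm_num) t
  have hderiv2 : ∀ t, HasDerivAt (iteratedDeriv 1 g) (iteratedDeriv 2 g t) t :=
    hasDerivAt_iteratedDeriv hg (by norm_num)
  have hstep : (2 : ℝ) ^ (-(j : ℤ) - 1) = 2 ^ (-(j : ℤ)) / 2 := zpow_sub_one₀ two_ne_zero _
  have hcube : (2 : ℝ) ^ (-(3 * (j : ℤ))) = (2 ^ (-(j : ℤ))) ^ 3 := by
    rw [← zpow_natCast, ← zpow_mul, Nat.cast_ofNat, neg_mul, mul_comm]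
  rw [hstep, hcube]
  refine (tsum_ofReal_delta2_half_sq_le hderiv hderiv2 hg2 (by positivity)).trans ?_
  gcongr
  exact div_le_self (by positivity) (by norm_num)
end

section
/- There exists a constant C > 0 such that for every twice continuously differentiable f : ℝ → ℝ one has max( (f(0)² + f(1)²)^{1/2}, sup_{j∈ℕ₀} 2^{3j/2} (Σ_{k=0}^{2^j − 1} |(1/2) Δ²_{2^{−j−1}} f(2^{−j}k)|²)^{1/2} ) ≤ C ( (∫_0^1 f(t)² dt)^{1/2} + (∫_0^1 f''(t)² dt)^{1/2} ). -/
open scoped BigOperators ENNReal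

/-!
On an interval of length `L`, a function `f` with `f'' ∈ L²` stays within
`L^(3/2) ‖f''‖_{L²}` of its tangent line at any point `x`, by Cauchy–Schwarz.

Second differences annihilate affine functions, so `Δ²_h f(t)` is controlled by `‖f''‖_{L²}` on
`[t, t + 2h]` alone; at level `j` these intervals tile `[0, 1]` and the squares add up.
The boundary values are controlled because the value at `x` of an affine function is bounded by its
`L²` norm, while the tangent line at `x` is `L²`-close to `f` and passes through `(x, f x)`.
-/

open MeasureTheory Set

theorem sq_integral_le_measureReal_univ_mul_integral_sq {α : Type*} [MeasurableSpace α]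
    {μ : Measure α} [IsFiniteMeasure μ] {g : α → ℝ} (hg : MemLp g 2 μ) :
    (∫ x, g x ∂μ) ^ 2 ≤ μ.real univ * ∫ x, g x ^ 2 ∂μ := by
  rcases eq_zero_or_neZero μ with rfl | _
  · simp
  have hpos : 0 < μ.real univ := measureReal_univ_pos
  have jensen : (⨍ x, g x ∂μ) ^ 2 ≤ ⨍ x, g x ^ 2 ∂μ :=
    (even_two.convexOn_pow (𝕜 := ℝ)).map_average_le (continuous_pow 2).continuousOn isClosed_univ
      (by simp) (hg.integrable one_le_two) hg.integrable_sq
  rw [average_eq, average_eq, smul_eq_mul, smul_eq_mul] at jensen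
  calc (∫ x, g x ∂μ) ^ 2
      = μ.real univ ^ 2 * ((μ.real univ)⁻¹ * ∫ x, g x ∂μ) ^ 2 := by field_simp
    _ ≤ μ.real univ ^ 2 * ((μ.real univ)⁻¹ * ∫ x, g x ^ 2 ∂μ) := by gcongr
    _ = μ.real univ * ∫ x, g x ^ 2 ∂μ := by field_simp

theorem four_mul_integral_sq_affine (a b x α β : ℝ) :
    4 * ∫ t in a..b, (α + β * (t - x)) ^ 2 =
      (b - a) * α ^ 2 +
        (b - a) / 3 *
          ((3 * α + 2 * β * (a + b - 2 * x)) ^ 2 + 4 * β ^ 2 * ((b - x) * (x - a))) := by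
  have antideriv (t : ℝ) : HasDerivAt
      (fun t ↦ α ^ 2 * t + α * β * (t - x) ^ 2 + β ^ 2 / 3 * (t - x) ^ 3)
      ((α + β * (t - x)) ^ 2) t := by
    have hsub : HasDerivAt (fun t ↦ t - x) 1 t := (hasDerivAt_id t).sub_const x
    exact ((((hasDerivAt_id t).const_mul (α ^ 2)).add ((hsub.pow 2).const_mul (α * β))).add
      ((hsub.pow 3).const_mul (β ^ 2 / 3))).congr_deriv (by push_cast; ring)
  rw [intervalIntegral.integral_eq_sub_of_hasDerivAt (fun t _ ↦ antideriv t)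
    (Continuous.intervalIntegrable (by fun_prop) a b)]
  ring

theorem mul_sq_le_integral_sq_affine {a b x : ℝ} (hx : x ∈ Icc a b) (α β : ℝ) :
    (b - a) * α ^ 2 ≤ 4 * ∫ t in a..b, (α + β * (t - x)) ^ 2 := by
  have hab : 0 ≤ b - a := sub_nonneg.2 (hx.1.trans hx.2)
  have hcross : 0 ≤ (b - x) * (x - a) := mul_nonneg (sub_nonneg.2 hx.2) (sub_nonneg.2 hx.1)
  rw [four_mul_integral_sq_affine]
  exact le_add_of_nonneg_right (by positivity)

/-- `f` lies in the Sobolev space `H²(a, b)`, with derivative `f'` and weak second derivative `f''`.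
The weak derivative is encoded by the fundamental theorem of calculus: `f'` is an indefinite
integral of `f'' ∈ L²(a, b)`. -/
structure HasH2DerivsOn (f f' f'' : ℝ → ℝ) (a b : ℝ) : Prop where
  hasDerivWithinAt : ∀ x ∈ Icc a b, HasDerivWithinAt f (f' x) (Icc a b) x
  integral_eq_sub : ∀ x ∈ Icc a b, ∀ y ∈ Icc a b, ∫ t in x..y, f'' t = f' y - f' x
  memLp : MemLp f'' 2 (volume.restrict (Ioc a b))

namespace HasH2DerivsOn

variable {f f' f'' : ℝ → ℝ} {a b : ℝ}

theorem of_contDiff (hf : ContDiff ℝ 2 f) (a b : ℝ) :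
    HasH2DerivsOn f (deriv f) (iteratedDeriv 2 f) a b where
  hasDerivWithinAt x _ := (hf.differentiable two_ne_zero x).hasDerivAt.hasDerivWithinAt
  integral_eq_sub x _ y _ := by
    have hderiv : ContDiff ℝ 1 (deriv f) := hf.deriv'
    rw [iteratedDeriv_succ, iteratedDeriv_one]
    exact intervalIntegral.integral_deriv_eq_sub
      (fun t _ ↦ hderiv.differentiable one_ne_zero t)
      ((hderiv.continuous_deriv le_rfl).intervalIntegrable x y)
  memLp := by
    have hcont : Continuous (iteratedDeriv 2 f) := hf.continuous_iteratedDeriv 2 le_rfl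
    exact (memLp_two_iff_integrable_sq hcont.aestronglyMeasurable).2 (hcont.pow 2).integrableOn_Ioc

theorem mono (hf : HasH2DerivsOn f f' f'' a b) {c d : ℝ} (hac : a ≤ c) (hdb : d ≤ b) :
    HasH2DerivsOn f f' f'' c d where
  hasDerivWithinAt x hx :=
    (hf.hasDerivWithinAt x (Icc_subset_Icc hac hdb hx)).mono (Icc_subset_Icc hac hdb)
  integral_eq_sub x hx y hy :=
    hf.integral_eq_sub x (Icc_subset_Icc hac hdb hx) y (Icc_subset_Icc hac hdb hy)
  memLp := hf.memLp.mono_measure (Measure.restrict_mono_set volume (Ioc_subset_Ioc hac hdb))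

theorem continuousOn (hf : HasH2DerivsOn f f' f'' a b) : ContinuousOn f (Icc a b) :=
  fun x hx ↦ (hf.hasDerivWithinAt x hx).continuousWithinAt

theorem sq_deriv_sub_le (hf : HasH2DerivsOn f f' f'' a b) {x y : ℝ} (hx : x ∈ Icc a b)
    (hy : y ∈ Icc a b) : (f' y - f' x) ^ 2 ≤ (b - a) * ∫ t in a..b, f'' t ^ 2 := by
  have hab : a ≤ b := hx.1.trans hx.2
  have hsub : uIoc x y ⊆ Ioc a b := Ioc_subset_Ioc (le_min hx.1 hy.1) (max_le hx.2 hy.2)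
  have habs : |f' y - f' x| ≤ ∫ t in Ioc a b, ‖f'' t‖ := by
    rw [← hf.integral_eq_sub x hx y hy]
    exact intervalIntegral.norm_integral_le_integral_norm_uIoc.trans
      (setIntegral_mono_set (hf.memLp.integrable one_le_two).norm
        (ae_of_all _ fun t ↦ norm_nonneg (f'' t)) hsub.eventuallyLE)
  calc (f' y - f' x) ^ 2 = |f' y - f' x| ^ 2 := (sq_abs _).symm
    _ ≤ (∫ t in Ioc a b, ‖f'' t‖) ^ 2 := by gcongr
    _ ≤ (b - a) * ∫ t in a..b, f'' t ^ 2 := by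
      simpa [intervalIntegral.integral_of_le hab, hab] using
        sq_integral_le_measureReal_univ_mul_integral_sq hf.memLp.norm

theorem sq_sub_tangent_le (hf : HasH2DerivsOn f f' f'' a b) {x y : ℝ} (hx : x ∈ Icc a b)
    (hy : y ∈ Icc a b) :
    (f y - f x - f' x * (y - x)) ^ 2 ≤ (b - a) * (∫ t in a..b, f'' t ^ 2) * (y - x) ^ 2 := by
  set K : ℝ := (b - a) * ∫ t in a..b, f'' t ^ 2
  have hK : 0 ≤ K := (sq_nonneg _).trans (hf.sq_deriv_sub_le hx hx)
  have hderiv (z : ℝ) (hz : z ∈ Icc a b) :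
      HasDerivWithinAt (fun z ↦ f z - f' x * z) (f' z - f' x) (Icc a b) z := by
    exact ((hf.hasDerivWithinAt z hz).sub ((hasDerivWithinAt_id z _).const_mul (f' x))).congr_deriv
      (by rw [mul_one])
  have hmvt : ‖(f y - f' x * y) - (f x - f' x * x)‖ ≤ √K * ‖y - x‖ :=
    (convex_Icc a b).norm_image_sub_le_of_norm_hasDerivWithin_le hderiv
      (fun z hz ↦ Real.abs_le_sqrt (hf.sq_deriv_sub_le hx hz)) hx hy
  calc (f y - f x - f' x * (y - x)) ^ 2
      = ‖(f y - f' x * y) - (f x - f' x * x)‖ ^ 2 := by rw [Real.norm_eq_abs, sq_abs]; ring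
    _ ≤ (√K * ‖y - x‖) ^ 2 := by gcongr
    _ = K * (y - x) ^ 2 := by rw [mul_pow, Real.sq_sqrt hK, Real.norm_eq_abs, sq_abs]

theorem sq_delta2_le {t h : ℝ} (hh : 0 ≤ h) (hf : HasH2DerivsOn f f' f'' t (t + 2 * h)) :
    delta2 f h t ^ 2 ≤ 8 * h ^ 3 * ∫ s in t..t + 2 * h, f'' s ^ 2 := by
  have hmid : t + h ∈ Icc t (t + 2 * h) := ⟨by linarith, by linarith⟩
  have hright := hf.sq_sub_tangent_le hmid (right_mem_Icc.2 (by linarith))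
  have hleft := hf.sq_sub_tangent_le hmid (left_mem_Icc.2 (by linarith))
  set R : ℝ := f (t + 2 * h) - f (t + h) - f' (t + h) * (t + 2 * h - (t + h))
  set L : ℝ := f t - f (t + h) - f' (t + h) * (t - (t + h))
  calc delta2 f h t ^ 2 = (R + L) ^ 2 := by simp only [delta2, R, L]; ring
    _ ≤ 2 * (R ^ 2 + L ^ 2) := add_sq_le
    _ ≤ 8 * h ^ 3 * ∫ s in t..t + 2 * h, f'' s ^ 2 := by linarith

theorem sum_sq_delta2_le {h : ℝ} (hh : 0 ≤ h) (n : ℕ)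
    (hf : HasH2DerivsOn f f' f'' a (a + 2 * h * n)) :
    ∑ k ∈ Finset.range n, delta2 f h (a + 2 * h * k) ^ 2 ≤
      8 * h ^ 3 * ∫ t in a..a + 2 * h * n, f'' t ^ 2 := by
  have hcell {k : ℕ} (hk : k < n) :
      HasH2DerivsOn f f' f'' (a + 2 * h * k) (a + 2 * h * (k + 1 : ℕ)) :=
    hf.mono (le_add_of_nonneg_right (by positivity)) (by gcongr; exact hk)
  have hle (k : ℕ) : a + 2 * h * k ≤ a + 2 * h * (k + 1 : ℕ) := by gcongr; exact k.le_succ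
  have hsum := intervalIntegral.sum_integral_adjacent_intervals (μ := volume)
    (f := fun t ↦ f'' t ^ 2) (a := fun k : ℕ ↦ a + 2 * h * k) (n := n) fun k hk ↦
      (intervalIntegrable_iff_integrableOn_Ioc_of_le (hle k)).2 (hcell hk).memLp.integrable_sq
  rw [Nat.cast_zero, mul_zero, add_zero] at hsum
  rw [← hsum, Finset.mul_sum]
  refine Finset.sum_le_sum fun k hk ↦ ?_
  have hend : a + 2 * h * (k + 1 : ℕ) = a + 2 * h * k + 2 * h := by push_cast; ring
  have hkcell := hcell (Finset.mem_range.1 hk)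
  rw [hend] at hkcell ⊢
  exact hkcell.sq_delta2_le hh

theorem mul_sq_le_integral_sq_add (hf : HasH2DerivsOn f f' f'' a b) {x : ℝ} (hx : x ∈ Icc a b) :
    (b - a) * f x ^ 2 ≤
      8 * ((∫ t in a..b, f t ^ 2) + (b - a) ^ 4 * ∫ t in a..b, f'' t ^ 2) := by
  have hab : a ≤ b := hx.1.trans hx.2
  set J : ℝ := ∫ t in a..b, f'' t ^ 2
  have hJ : 0 ≤ (b - a) * J := (sq_nonneg _).trans (hf.sq_deriv_sub_le hx hx)
  have htangent (t : ℝ) (ht : t ∈ Icc a b) :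
      (f x + f' x * (t - x)) ^ 2 ≤ 2 * f t ^ 2 + 2 * (b - a) ^ 3 * J := by
    have hdist : (t - x) ^ 2 ≤ (b - a) ^ 2 :=
      sq_le_sq.2 ((abs_sub_le_of_le_of_le ht.1 ht.2 hx.1 hx.2).trans (le_abs_self _))
    calc (f x + f' x * (t - x)) ^ 2
        = (f t + -(f t - f x - f' x * (t - x))) ^ 2 := by ring
      _ ≤ 2 * (f t ^ 2 + (-(f t - f x - f' x * (t - x))) ^ 2) := add_sq_le
      _ = 2 * (f t ^ 2 + (f t - f x - f' x * (t - x)) ^ 2) := by rw [neg_sq]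
      _ ≤ 2 * (f t ^ 2 + (b - a) * J * (b - a) ^ 2) := by
        gcongr
        exact (hf.sq_sub_tangent_le hx ht).trans (by gcongr)
      _ = 2 * f t ^ 2 + 2 * (b - a) ^ 3 * J := by ring
  have hint : IntervalIntegrable (fun t ↦ 2 * f t ^ 2) volume a b :=
    ((hf.continuousOn.pow 2).const_mul 2).intervalIntegrable_of_Icc hab
  calc (b - a) * f x ^ 2
      ≤ 4 * ∫ t in a..b, (f x + f' x * (t - x)) ^ 2 := mul_sq_le_integral_sq_affine hx _ _
    _ ≤ 4 * ∫ t in a..b, (2 * f t ^ 2 + 2 * (b - a) ^ 3 * J) := by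
      gcongr
      exact intervalIntegral.integral_mono_on hab
        (Continuous.intervalIntegrable (by fun_prop) a b) (hint.add intervalIntegrable_const)
        htangent
    _ = 8 * ((∫ t in a..b, f t ^ 2) + (b - a) ^ 4 * J) := by
      rw [intervalIntegral.integral_add hint intervalIntegrable_const,
        intervalIntegral.integral_const_mul, intervalIntegral.integral_const, smul_eq_mul]
      ring

theorem boundary_norm_le (hf : HasH2DerivsOn f f' f'' 0 1) :
    √(f 0 ^ 2 + f 1 ^ 2) ≤
      4 * (√(∫ t in (0 : ℝ)..1, f t ^ 2) + √(∫ t in (0 : ℝ)..1, f'' t ^ 2)) := by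
  set I : ℝ := ∫ t in (0 : ℝ)..1, f t ^ 2
  set J : ℝ := ∫ t in (0 : ℝ)..1, f'' t ^ 2
  have hI : 0 ≤ I := intervalIntegral.integral_nonneg zero_le_one fun t _ ↦ sq_nonneg (f t)
  have hJ : 0 ≤ J := intervalIntegral.integral_nonneg zero_le_one fun t _ ↦ sq_nonneg (f'' t)
  have hzero := hf.mul_sq_le_integral_sq_add (left_mem_Icc.2 zero_le_one)
  have hone := hf.mul_sq_le_integral_sq_add (right_mem_Icc.2 zero_le_one)
  refine Real.sqrt_le_iff.2 ⟨by positivity, ?_⟩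
  calc f 0 ^ 2 + f 1 ^ 2 ≤ 16 * (√I ^ 2 + √J ^ 2) := by
        rw [Real.sq_sqrt hI, Real.sq_sqrt hJ]; linarith
    _ ≤ 16 * (√I + √J) ^ 2 := by
      gcongr
      exact pow_add_pow_le (Real.sqrt_nonneg I) (Real.sqrt_nonneg J) two_ne_zero
    _ = (4 * (√I + √J)) ^ 2 := by ring

theorem dyadic_level_norm_le (hf : HasH2DerivsOn f f' f'' 0 1) (j : ℕ) :
    (2 : ℝ) ^ (3 * (j : ℝ) / 2) *
        √(∑ k ∈ Finset.range (2 ^ j),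
          ((1 / 2) * delta2 f ((2 : ℝ) ^ (-(j : ℤ) - 1)) ((2 : ℝ) ^ (-(j : ℤ)) * (k : ℝ))) ^ 2) ≤
      √(∫ t in (0 : ℝ)..1, f'' t ^ 2) / 2 := by
  set h : ℝ := (2 : ℝ) ^ (-(j : ℤ) - 1) with hdef
  have hh : 0 ≤ h := by positivity
  have hstep : (2 : ℝ) ^ (-(j : ℤ)) = 2 * h := by
    rw [hdef, zpow_sub_one₀ two_ne_zero]; ring
  have htile : 2 ^ j * (2 * h) = 1 := by
    rw [← hstep, zpow_neg, zpow_natCast, mul_inv_cancel₀ (by positivity)]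
  have hweight : (2 : ℝ) ^ (3 * (j : ℝ) / 2) = √((2 ^ j) ^ 3) := by
    rw [Real.sqrt_eq_rpow, ← pow_mul, ← Real.rpow_natCast, ← Real.rpow_mul zero_le_two]
    congr 1
    push_cast
    ring
  have hsum : ∑ k ∈ Finset.range (2 ^ j), delta2 f h (2 * h * k) ^ 2 ≤
      8 * h ^ 3 * ∫ t in (0 : ℝ)..1, f'' t ^ 2 := by
    have hlen : (0 : ℝ) + 2 * h * (2 ^ j : ℕ) = 1 := by push_cast; linarith
    simpa only [hlen, zero_add] using sum_sq_delta2_le (a := 0) hh (2 ^ j) (by rwa [hlen])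
  rw [hstep, hweight, ← Real.sqrt_mul (by positivity)]
  refine Real.sqrt_le_iff.2 ⟨by positivity, ?_⟩
  rw [div_pow, Real.sq_sqrt
    (intervalIntegral.integral_nonneg zero_le_one fun t _ ↦ sq_nonneg (f'' t))]
  simp only [mul_pow, ← Finset.mul_sum]
  calc (2 ^ j) ^ 3 * ((1 / 2) ^ 2 * ∑ k ∈ Finset.range (2 ^ j), delta2 f h (2 * h * k) ^ 2)
      ≤ (2 ^ j) ^ 3 * ((1 / 2) ^ 2 * (8 * h ^ 3 * ∫ t in (0 : ℝ)..1, f'' t ^ 2)) := by gcongr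
    _ = (2 ^ j * (2 * h)) ^ 3 * (∫ t in (0 : ℝ)..1, f'' t ^ 2) / 2 ^ 2 := by ring
    _ = (∫ t in (0 : ℝ)..1, f'' t ^ 2) / 2 ^ 2 := by rw [htile, one_pow, one_mul]

end HasH2DerivsOn

theorem dyadic_norm_le_sobolev_unit_interval_general {f f' f'' : ℝ → ℝ}
    (hf : HasH2DerivsOn f f' f'' 0 1) :
    √(f 0 ^ 2 + f 1 ^ 2) ≤
        4 * (√(∫ t in (0 : ℝ)..1, f t ^ 2) + √(∫ t in (0 : ℝ)..1, f'' t ^ 2)) ∧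
      ∀ j : ℕ,
        (2 : ℝ) ^ (3 * (j : ℝ) / 2) *
            √(∑ k ∈ Finset.range (2 ^ j),
              ((1 / 2) * delta2 f ((2 : ℝ) ^ (-(j : ℤ) - 1))
                ((2 : ℝ) ^ (-(j : ℤ)) * (k : ℝ))) ^ 2) ≤
          4 * (√(∫ t in (0 : ℝ)..1, f t ^ 2) + √(∫ t in (0 : ℝ)..1, f'' t ^ 2)) := by
  refine ⟨hf.boundary_norm_le, fun j ↦ (hf.dyadic_level_norm_le j).trans ?_⟩
  have hI : 0 ≤ √(∫ t in (0 : ℝ)..1, f t ^ 2) := Real.sqrt_nonneg _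
  have hJ : 0 ≤ √(∫ t in (0 : ℝ)..1, f'' t ^ 2) := Real.sqrt_nonneg _
  linarith

/-- dyadic norm bound on `[0,1]`: there is `C > 0` such that for every
`f ∈ C²`, both the boundary term `(f(0)² + f(1)²)^{1/2}` and every level term
`2^{3j/2} (Σ_{k<2^j} |(1/2)Δ²_{2^{−j−1}} f(2^{−j}k)|²)^{1/2}` are bounded by
`C(‖f‖_{L²([0,1])} + ‖f''‖_{L²([0,1])})`; i.e. the maximum of the two is. -/
theorem dyadic_norm_le_sobolev_unit_interval :
    ∃ C : ℝ, 0 < C ∧ ∀ f : ℝ → ℝ, ContDiff ℝ 2 f →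
      (Real.sqrt (f 0 ^ 2 + f 1 ^ 2)
          ≤ C * (Real.sqrt (∫ t in (0:ℝ)..1, f t ^ 2)
              + Real.sqrt (∫ t in (0:ℝ)..1, (iteratedDeriv 2 f t)^2))) ∧
      (∀ j : ℕ,
        (2:ℝ) ^ (3 * (j:ℝ) / 2) *
            Real.sqrt (∑ k ∈ Finset.range (2^j),
              ((1/2) * delta2 f ((2:ℝ)^(-(j:ℤ)-1)) ((2:ℝ)^(-(j:ℤ)) * (k:ℝ)))^2)
          ≤ C * (Real.sqrt (∫ t in (0:ℝ)..1, f t ^ 2)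
              + Real.sqrt (∫ t in (0:ℝ)..1, (iteratedDeriv 2 f t)^2))) :=
  ⟨4, by norm_num, fun _ hf ↦
    dyadic_norm_le_sobolev_unit_interval_general (.of_contDiff hf 0 1)⟩
end

section
/- For every j ∈ ℕ₀, every k ∈ {0, 1, …, 2^j − 1} and every x ∈ [0,1] one has v_{j,k}(|2x − 1|) = v_{j+1, 2^j + k}(x) + v_{j+1, 2^j − k − 1}(x). Moreover, for every x ∈ [0,1], v_{−1,0}(|2x − 1|) = v_{0,0}(x) and v_{−1,1}(|2x − 1|) = 1 − v_{0,0}(x). -/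
open scoped BigOperators ENNReal

/-! Every Faber function is a translated dilate of the triangle function `t ↦ max (1 - |t|) 0`. With
`u = 2 ^ (j + 1) * (2 * x - 1)`, the left-hand side of the identity at level `j` is the triangle
function at `|u| - (2 * k + 1)`, and the two summands on the right are its values at
`u - (2 * k + 1)` and `u + (2 * k + 1)`. Since `1 ≤ 2 * k + 1`, one of the summands vanishes
according to the sign of `u`, and the other is the left-hand side because the triangle function is
even. -/

/-- The hat function of height `1` supported on `[-1, 1]`, the common profile of all Faber
functions. -/
noncomputable def triangleFn (t : ℝ) : ℝ := max (1 - |t|) 0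

lemma triangleFn_neg (t : ℝ) : triangleFn (-t) = triangleFn t := by
  simp only [triangleFn, abs_neg]

lemma triangleFn_eq_zero_of_one_le_abs {t : ℝ} (ht : 1 ≤ |t|) : triangleFn t = 0 :=
  max_eq_right (sub_nonpos.2 ht)

lemma triangleFn_eq_one_sub_abs {t : ℝ} (ht : |t| ≤ 1) : triangleFn t = 1 - |t| :=
  max_eq_left (sub_nonneg.2 ht)

lemma triangleFn_abs (t : ℝ) : triangleFn |t| = triangleFn t := by
  simp only [triangleFn, abs_abs]

lemma triangleFn_abs_sub_one {t : ℝ} (ht : |t| ≤ 1) : triangleFn (|t| - 1) = 1 - triangleFn t := by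
  have habs : |(|t| - 1)| = 1 - |t| := by rw [abs_of_nonpos (sub_nonpos.2 ht), neg_sub]
  have hle : |(|t| - 1)| ≤ 1 := by
    rw [habs]
    exact sub_le_self 1 (abs_nonneg t)
  rw [triangleFn_eq_one_sub_abs hle, habs, triangleFn_eq_one_sub_abs ht]

lemma triangleFn_abs_sub {a : ℝ} (ha : 1 ≤ a) (u : ℝ) :
    triangleFn (|u| - a) = triangleFn (u - a) + triangleFn (u + a) := by
  rcases le_total 0 u with hu | hu
  · have hright : 1 ≤ |u + a| := (by linarith : 1 ≤ u + a).trans (le_abs_self _)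
    rw [abs_of_nonneg hu, triangleFn_eq_zero_of_one_le_abs hright, add_zero]
  · have hleft : 1 ≤ |u - a| := (by linarith : 1 ≤ -(u - a)).trans (neg_le_abs _)
    rw [abs_of_nonpos hu, triangleFn_eq_zero_of_one_le_abs hleft, zero_add, ← triangleFn_neg,
      neg_sub, sub_neg_eq_add, add_comm]

lemma hatFn_eq_triangleFn (j k : ℤ) (x : ℝ) :
    hatFn j k x = triangleFn (2 ^ (j + 1) * x - (2 * k + 1)) := by
  have hpos : (0 : ℝ) < 2 ^ j := by positivity
  have hsucc : (2 : ℝ) ^ (j + 1) = 2 * 2 ^ j := by rw [zpow_add_one₀ two_ne_zero, mul_comm]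
  have hle (a : ℝ) : 2 ^ (-j) * a ≤ x ↔ a ≤ 2 ^ j * x := by
    rw [zpow_neg, inv_mul_le_iff₀ hpos]
  have hge (a : ℝ) : x ≤ 2 ^ (-j) * a ↔ 2 ^ j * x ≤ a := by
    rw [zpow_neg, le_inv_mul_iff₀ hpos]
  have hcancel (a : ℝ) : (2 : ℝ) ^ j * (2 ^ (-j) * a) = a := by
    rw [zpow_neg, mul_inv_cancel_left₀ hpos.ne']
  simp only [hatFn, hsucc, hle, hge, mul_assoc, mul_sub, hcancel]
  generalize (2 : ℝ) ^ j * x = y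
  split_ifs with hrise hfall
  · have habs : |2 * y - (2 * k + 1)| = 2 * k + 1 - 2 * y := by
      rw [abs_of_nonpos (by linarith), neg_sub]
    rw [triangleFn_eq_one_sub_abs (by linarith), habs]
    ring
  · have habs : |2 * y - (2 * k + 1)| = 2 * y - (2 * k + 1) := abs_of_nonneg (by linarith)
    rw [triangleFn_eq_one_sub_abs (by linarith), habs]
    ring
  · refine (triangleFn_eq_zero_of_one_le_abs ?_).symm
    by_contra! hlt
    obtain ⟨hleft, hright⟩ := abs_lt.1 hlt
    rcases le_total y (k + 1 / 2) with hy | hy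
    · exact hrise ⟨by linarith, hy⟩
    · exact hfall ⟨hy, by linarith⟩

lemma faberV_neg_one (k : ℤ) (x : ℝ) : faberV (-1) k x = triangleFn (x - k) :=
  if_pos rfl

lemma faberV_eq_triangleFn {j : ℤ} (hj : j ≠ -1) (k : ℤ) (x : ℝ) :
    faberV j k x = triangleFn (2 ^ (j + 1) * x - (2 * k + 1)) :=
  (if_neg hj).trans (hatFn_eq_triangleFn j k x)

lemma faberV_zero_zero (x : ℝ) : faberV 0 0 x = triangleFn (2 * x - 1) := by
  simp [faberV_eq_triangleFn]

lemma faberV_abs_two_mul_sub_one (j k : ℕ) (x : ℝ) :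
    faberV j k |2 * x - 1|
      = faberV ((j : ℤ) + 1) (2 ^ j + k) x + faberV ((j : ℤ) + 1) (2 ^ j - k - 1) x := by
  have hk : (1 : ℝ) ≤ 2 * k + 1 := by linarith [k.cast_nonneg (α := ℝ)]
  have hhalf : (2 : ℝ) ^ ((j : ℤ) + 1) = 2 * 2 ^ j := by
    rw [zpow_add_one₀ two_ne_zero, zpow_natCast, mul_comm]
  have hdouble : (2 : ℝ) ^ ((j : ℤ) + 1 + 1) = 2 * 2 ^ ((j : ℤ) + 1) := by
    rw [zpow_add_one₀ two_ne_zero, mul_comm]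
  set u : ℝ := 2 ^ ((j : ℤ) + 1) * (2 * x - 1) with hu
  have hscale : 2 ^ ((j : ℤ) + 1) * |2 * x - 1| = |u| := by
    rw [hu, abs_mul, abs_zpow, abs_two]
  have hright : 2 ^ ((j : ℤ) + 1 + 1) * x - (2 * ((2 ^ j + k : ℤ) : ℝ) + 1) = u - (2 * k + 1) := by
    rw [hu, hdouble, hhalf]
    push_cast
    ring
  have hleft :
      2 ^ ((j : ℤ) + 1 + 1) * x - (2 * ((2 ^ j - k - 1 : ℤ) : ℝ) + 1) = u + (2 * k + 1) := by
    rw [hu, hdouble, hhalf]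
    push_cast
    ring
  rw [faberV_eq_triangleFn (by lia), faberV_eq_triangleFn (by lia),
    faberV_eq_triangleFn (by lia), hscale, hright, hleft, Int.cast_natCast, triangleFn_abs_sub hk]

theorem tent_transform_faber_basis_general :
    (∀ (j k : ℕ) (x : ℝ),
      faberV j k |2 * x - 1|
        = faberV ((j : ℤ) + 1) (2 ^ j + k) x + faberV ((j : ℤ) + 1) (2 ^ j - k - 1) x) ∧
    (∀ x : ℝ, faberV (-1) 0 |2 * x - 1| = faberV 0 0 x) ∧
    (∀ x ∈ Set.Icc (0 : ℝ) 1, faberV (-1) 1 |2 * x - 1| = 1 - faberV 0 0 x) := by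
  refine ⟨faberV_abs_two_mul_sub_one, fun x => ?_, fun x hx => ?_⟩
  · rw [faberV_neg_one, Int.cast_zero, sub_zero, triangleFn_abs, faberV_zero_zero]
  · have habs : |2 * x - 1| ≤ 1 := abs_le.2 ⟨by linarith [hx.1], by linarith [hx.2]⟩
    rw [faberV_neg_one, Int.cast_one, triangleFn_abs_sub_one habs, faberV_zero_zero]

/-- tent transform of Faber basis functions: for `j ∈ ℕ₀`,
`0 ≤ k < 2^j` and `x ∈ [0,1]`, `v_{j,k}(|2x−1|) = v_{j+1,2^j+k}(x) + v_{j+1,2^j−k−1}(x)`;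
moreover `v_{−1,0}(|2x−1|) = v_{0,0}(x)` and `v_{−1,1}(|2x−1|) = 1 − v_{0,0}(x)`. -/
theorem tent_transform_faber_basis :
    (∀ (j k : ℕ), k < 2^j → ∀ x ∈ Set.Icc (0:ℝ) 1,
      faberV (j:ℤ) (k:ℤ) (|2*x - 1|)
        = faberV ((j:ℤ)+1) ((2:ℤ)^j + (k:ℤ)) x + faberV ((j:ℤ)+1) ((2:ℤ)^j - (k:ℤ) - 1) x) ∧
    (∀ x ∈ Set.Icc (0:ℝ) 1, faberV (-1) 0 (|2*x - 1|) = faberV 0 0 x) ∧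
    (∀ x ∈ Set.Icc (0:ℝ) 1, faberV (-1) 1 (|2*x - 1|) = 1 - faberV 0 0 x) :=
  have ⟨hlevel, hzero, hone⟩ := tent_transform_faber_basis_general
  ⟨fun j k _ x _ => hlevel j k x, fun x _ => hzero x, hone⟩
end

section
/- Let f : ℝ → ℝ be twice continuously differentiable and let k be a nonzero integer. Then | ∫_0^1 f(|2x − 1|) e^{−2πi k x} dx | ≤ (1/(πk)²) · ( |f'(1)| + |f'(0)| + (1/√2) (∫_0^1 f''(t)² dt)^{1/2} ). -/
open scoped BigOperators

/-!
Substituting `t = 2 * x - 1` and folding `[-1, 1]` onto `[0, 1]` turns the `k`-th Fourier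
coefficient of the tent transformed function, up to the unimodular factor `exp (-πik)`, into the
cosine coefficient `∫₀¹ cos (πkt) f(t) dt`. Since `sin (πkt)` vanishes at both endpoints,
integrating by parts twice costs only the two boundary values of `f'` and gains `(πk)⁻²`. The
remaining cosine coefficient of `f''` is bounded by Cauchy–Schwarz, and `‖cos (πk ·)‖₂ = 1 / √2`.
-/

open MeasureTheory Set

section Folding

variable {𝕜 E : Type*} [NormedRing 𝕜] [NormedAddCommGroup E] [Module 𝕜 E] [IsBoundedSMul 𝕜 E]

lemma intervalIntegrable_smul_comp_abs {a : ℝ} (ha : 0 ≤ a) {φ : ℝ → 𝕜} {f : ℝ → E}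
    (hφ : ContinuousOn φ (Icc 0 a)) (hf : IntervalIntegrable f volume 0 a) :
    IntervalIntegrable (fun t ↦ φ t • f |t|) volume 0 a := by
  rw [← uIcc_of_le ha] at hφ
  refine (hf.continuousOn_smul hφ).congr fun t ht ↦ ?_
  rw [uIoc_of_le ha] at ht
  simp only [abs_of_pos ht.1]

lemma integral_smul_comp_abs [NormedSpace ℝ E] {a : ℝ} (ha : 0 ≤ a) {φ : ℝ → 𝕜} {f : ℝ → E}
    (hφ : ContinuousOn φ (Icc (-a) a)) (hf : IntervalIntegrable f volume 0 a) :
    ∫ t in -a..a, φ t • f |t| = ∫ t in 0..a, (φ (-t) + φ t) • f t := by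
  have hφ_neg : ContinuousOn (fun t ↦ φ (-t)) (Icc 0 a) :=
    hφ.comp continuousOn_neg fun t ht ↦ ⟨neg_le_neg ht.2, by linarith [ht.1]⟩
  have h_right := intervalIntegrable_smul_comp_abs ha
    (hφ.mono (Icc_subset_Icc_left (neg_nonpos.2 ha))) hf
  have h_reflected : IntervalIntegrable (fun t ↦ φ (-t) • f |t|) volume 0 a :=
    intervalIntegrable_smul_comp_abs ha hφ_neg hf
  have h_left : IntervalIntegrable (fun t ↦ φ t • f |t|) volume (-a) 0 := by
    rw [IntervalIntegrable.iff_comp_neg]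
    simpa using h_reflected.symm
  calc ∫ t in -a..a, φ t • f |t|
      = (∫ t in -a..0, φ t • f |t|) + ∫ t in 0..a, φ t • f |t| :=
        (intervalIntegral.integral_add_adjacent_intervals h_left h_right).symm
    _ = (∫ t in 0..a, φ (-t) • f |t|) + ∫ t in 0..a, φ t • f |t| := by
        simpa using (intervalIntegral.integral_comp_neg (a := 0) (b := a)
          fun t ↦ φ t • f |t|).symm
    _ = ∫ t in 0..a, (φ (-t) • f |t| + φ t • f |t|) :=
        (intervalIntegral.integral_add h_reflected h_right).symm
    _ = ∫ t in 0..a, (φ (-t) + φ t) • f t := by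
        refine intervalIntegral.integral_congr fun t ht ↦ ?_
        rw [uIcc_of_le ha] at ht
        simp only [abs_of_nonneg ht.1, add_smul]

end Folding

lemma integral_exp_smul_comp_tent {E : Type*} [NormedAddCommGroup E] [NormedSpace ℂ E]
    {f : ℝ → E} (hf : IntervalIntegrable f volume 0 1) (ω : ℝ) :
    ∫ x in (0 : ℝ)..1, Complex.exp (-2 * ω * Complex.I * x) • f |2 * x - 1| =
      Complex.exp ((-ω : ℝ) * Complex.I) • ∫ t in (0 : ℝ)..1, Real.cos (ω * t) • f t := by
  have h_exp_add (t : ℝ) : Complex.exp (-ω * Complex.I * ((-t : ℝ) + 1)) +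
      Complex.exp (-ω * Complex.I * (t + 1)) =
        2 * (Complex.exp ((-ω : ℝ) * Complex.I) * Real.cos (ω * t)) := by
    push_cast
    rw [mul_left_comm, Complex.two_cos, mul_add (Complex.exp _), ← Complex.exp_add,
      ← Complex.exp_add]
    ring_nf
  calc ∫ x in (0 : ℝ)..1, Complex.exp (-2 * ω * Complex.I * x) • f |2 * x - 1|
      = ∫ x in (0 : ℝ)..1,
          Complex.exp (-ω * Complex.I * ((2 * x - 1 : ℝ) + 1)) • f |2 * x - 1| := by
        refine intervalIntegral.integral_congr fun x _ ↦ ?_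
        push_cast
        ring_nf
    _ = (2⁻¹ : ℝ) • ∫ t in (-1 : ℝ)..1, Complex.exp (-ω * Complex.I * (t + 1)) • f |t| := by
        rw [intervalIntegral.integral_comp_mul_sub
          (fun t : ℝ ↦ Complex.exp (-ω * Complex.I * (t + 1)) • f |t|) two_ne_zero]
        norm_num
    _ = (2⁻¹ : ℝ) • ∫ t in (0 : ℝ)..1,
          (2 * (Complex.exp ((-ω : ℝ) * Complex.I) * Real.cos (ω * t))) • f t := by
        rw [integral_smul_comp_abs zero_le_one (by fun_prop) hf]
        simp only [h_exp_add]
    _ = Complex.exp ((-ω : ℝ) * Complex.I) • ∫ t in (0 : ℝ)..1, Real.cos (ω * t) • f t := by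
        rw [← intervalIntegral.integral_smul, ← intervalIntegral.integral_smul]
        refine intervalIntegral.integral_congr fun t _ ↦ ?_
        simp only [mul_smul, Complex.coe_smul, ofNat_smul_eq_nsmul]
        module

lemma norm_integral_smul_le_sqrt_mul_sqrt {α 𝕜 E : Type*} [MeasurableSpace α] {μ : Measure α}
    [NormedRing 𝕜] [NormedAddCommGroup E] [NormedSpace ℝ E] [Module 𝕜 E] [IsBoundedSMul 𝕜 E]
    {φ : α → 𝕜} {g : α → E} (hφ : MemLp φ 2 μ) (hg : MemLp g 2 μ) :
    ‖∫ x, φ x • g x ∂μ‖ ≤ √(∫ x, ‖φ x‖ ^ 2 ∂μ) * √(∫ x, ‖g x‖ ^ 2 ∂μ) := by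
  calc ‖∫ x, φ x • g x ∂μ‖ ≤ ∫ x, ‖φ x‖ * ‖g x‖ ∂μ :=
        norm_integral_le_of_norm_le (hφ.norm.integrable_mul hg.norm)
          (.of_forall fun x ↦ norm_smul_le (φ x) (g x))
    _ ≤ √(∫ x, ‖φ x‖ ^ 2 ∂μ) * √(∫ x, ‖g x‖ ^ 2 ∂μ) := by
        simpa [Real.sqrt_eq_rpow] using
          integral_mul_le_Lp_mul_Lq_of_nonneg Real.HolderConjugate.two_two
            (.of_forall fun x ↦ norm_nonneg (φ x)) (.of_forall fun x ↦ norm_nonneg (g x))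
            (by simpa using hφ.norm) (by simpa using hg.norm)

section CosineCoefficients

lemma integral_cos_mul_sq {ω : ℝ} (hω : ω ≠ 0) (a b : ℝ) :
    ∫ t in a..b, Real.cos (ω * t) ^ 2 =
      (b - a) / 2 + (Real.cos (ω * b) * Real.sin (ω * b) -
        Real.cos (ω * a) * Real.sin (ω * a)) / (2 * ω) := by
  rw [intervalIntegral.integral_comp_mul_left (fun t ↦ Real.cos t ^ 2) hω, integral_cos_sq,
    smul_eq_mul]
  field_simp
  ring

variable {E : Type*} [NormedAddCommGroup E] [NormedSpace ℝ E]

lemma norm_integral_cos_smul_le_L2 {ω : ℝ} (hω : ω ≠ 0) (hsin : Real.sin ω = 0) {g : ℝ → E}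
    (hg : MemLp g 2 (volume.restrict (Ioc 0 1))) :
    ‖∫ t in (0 : ℝ)..1, Real.cos (ω * t) • g t‖ ≤
      1 / √2 * √(∫ t in (0 : ℝ)..1, ‖g t‖ ^ 2) := by
  have h_cos_memLp : MemLp (fun t ↦ Real.cos (ω * t)) 2 (volume.restrict (Ioc 0 1)) :=
    .of_bound (by fun_prop) 1 (.of_forall fun t ↦ Real.abs_cos_le_one (ω * t))
  have h_cos_sq : ∫ t in (0 : ℝ)..1, ‖Real.cos (ω * t)‖ ^ 2 = 1 / 2 := by
    simp [integral_cos_mul_sq hω, hsin]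
  have h_cauchy_schwarz := norm_integral_smul_le_sqrt_mul_sqrt h_cos_memLp hg
  simp only [← intervalIntegral.integral_of_le zero_le_one, h_cos_sq] at h_cauchy_schwarz
  simpa using h_cauchy_schwarz

variable [CompleteSpace E] {f f' f'' : ℝ → E}

lemma sq_smul_integral_cos_smul {a b : ℝ} (hab : a ≤ b) (hf : ContinuousOn f (Icc a b))
    (hf' : ContinuousOn f' (Icc a b)) (hff' : ∀ t ∈ Ioo a b, HasDerivAt f (f' t) t)
    (hf'f'' : ∀ t ∈ Ioo a b, HasDerivAt f' (f'' t) t) (hf'' : IntervalIntegrable f'' volume a b)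
    (ω : ℝ) :
    ω ^ 2 • ∫ t in a..b, Real.cos (ω * t) • f t =
      (Real.cos (ω * b) • f' b + (ω * Real.sin (ω * b)) • f b) -
        (Real.cos (ω * a) • f' a + (ω * Real.sin (ω * a)) • f a) -
          ∫ t in a..b, Real.cos (ω * t) • f'' t := by
  have h_cos_f : IntervalIntegrable (fun t ↦ ω ^ 2 • Real.cos (ω * t) • f t) volume a b :=
    ContinuousOn.intervalIntegrable_of_Icc hab (by fun_prop)
  have h_cos_f'' : IntervalIntegrable (fun t ↦ Real.cos (ω * t) • f'' t) volume a b :=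
    hf''.continuousOn_smul (by fun_prop)
  have h_deriv (t : ℝ) (ht : t ∈ Ioo a b) :
      HasDerivAt (fun t ↦ Real.cos (ω * t) • f' t + (ω * Real.sin (ω * t)) • f t)
        (ω ^ 2 • Real.cos (ω * t) • f t + Real.cos (ω * t) • f'' t) t := by
    have h_mul : HasDerivAt (ω * ·) ω t := hasDerivAt_const_mul ω
    refine ((h_mul.cos.smul (hf'f'' t ht)).add
      ((h_mul.sin.const_mul ω).smul (hff' t ht))).congr_deriv ?_
    module
  rw [eq_sub_iff_add_eq, ← intervalIntegral.integral_smul,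
    ← intervalIntegral.integral_add h_cos_f h_cos_f'']
  exact intervalIntegral.integral_eq_sub_of_hasDerivAt_of_le hab (by fun_prop) h_deriv
    (h_cos_f.add h_cos_f'')

lemma norm_integral_cos_smul_le {ω : ℝ} (hω : ω ≠ 0) (hsin : Real.sin ω = 0)
    (hf : ContinuousOn f (Icc 0 1)) (hf' : ContinuousOn f' (Icc 0 1))
    (hff' : ∀ t ∈ Ioo (0 : ℝ) 1, HasDerivAt f (f' t) t)
    (hf'f'' : ∀ t ∈ Ioo (0 : ℝ) 1, HasDerivAt f' (f'' t) t)
    (hf'' : MemLp f'' 2 (volume.restrict (Ioc 0 1))) :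
    ‖∫ t in (0 : ℝ)..1, Real.cos (ω * t) • f t‖ ≤
      1 / ω ^ 2 * (‖f' 1‖ + ‖f' 0‖ + 1 / √2 * √(∫ t in (0 : ℝ)..1, ‖f'' t‖ ^ 2)) := by
  have h_integrable : IntervalIntegrable f'' volume 0 1 :=
    (intervalIntegrable_iff_integrableOn_Ioc_of_le zero_le_one).2 (hf''.integrable one_le_two)
  have h_parts : ω ^ 2 • ∫ t in (0 : ℝ)..1, Real.cos (ω * t) • f t =
      Real.cos ω • f' 1 - f' 0 - ∫ t in (0 : ℝ)..1, Real.cos (ω * t) • f'' t := by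
    simpa [hsin] using sq_smul_integral_cos_smul zero_le_one hf hf' hff' hf'f'' h_integrable ω
  have h_boundary : ‖Real.cos ω • f' 1‖ ≤ ‖f' 1‖ := by
    rw [norm_smul]
    exact mul_le_of_le_one_left (norm_nonneg _) (Real.abs_cos_le_one ω)
  have hω_sq : 0 < ω ^ 2 := by positivity
  rw [one_div_mul_eq_div, le_div_iff₀' hω_sq, ← norm_smul_of_nonneg hω_sq.le, h_parts]
  grw [norm_sub_le, norm_sub_le, h_boundary, norm_integral_cos_smul_le_L2 hω hsin hf'']

end CosineCoefficients

theorem tent_fourier_coefficient_decay_general {E : Type*} [NormedAddCommGroup E]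
    [NormedSpace ℂ E] [CompleteSpace E] {f f' f'' : ℝ → E}
    (hf : ContinuousOn f (Icc 0 1)) (hf' : ContinuousOn f' (Icc 0 1))
    (hff' : ∀ t ∈ Ioo (0 : ℝ) 1, HasDerivAt f (f' t) t)
    (hf'f'' : ∀ t ∈ Ioo (0 : ℝ) 1, HasDerivAt f' (f'' t) t)
    (hf'' : MemLp f'' 2 (volume.restrict (Ioc 0 1))) {k : ℤ} (hk : k ≠ 0) :
    ‖∫ x in (0 : ℝ)..1, Complex.exp (-2 * Real.pi * Complex.I * k * x) • f |2 * x - 1|‖ ≤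
      1 / (Real.pi * k) ^ 2 *
        (‖f' 1‖ + ‖f' 0‖ + 1 / √2 * √(∫ t in (0 : ℝ)..1, ‖f'' t‖ ^ 2)) := by
  have hω : Real.pi * k ≠ 0 := mul_ne_zero Real.pi_ne_zero (Int.cast_ne_zero.2 hk)
  have hsin : Real.sin (Real.pi * k) = 0 := by rw [mul_comm, Real.sin_int_mul_pi]
  have h_fold := integral_exp_smul_comp_tent
    (hf.intervalIntegrable_of_Icc zero_le_one) (Real.pi * k)
  have h_exponent (x : ℝ) : -2 * (Real.pi : ℂ) * Complex.I * k * x =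
      -2 * (Real.pi * k : ℝ) * Complex.I * x := by
    push_cast
    ring
  have h_cos_bound := norm_integral_cos_smul_le hω hsin hf hf' hff' hf'f'' hf''
  simp only [h_exponent]
  rwa [h_fold, norm_smul, Complex.norm_exp_ofReal_mul_I, one_mul]

/-- for `f ∈ C²(ℝ)` and `k ∈ ℤ \ {0}`, the `k`-th Fourier coefficient of
the tent transformed function satisfies
`|∫₀¹ f(|2x−1|)e^{−2πikx} dx| ≤ (1/(πk)²)(|f'(1)| + |f'(0)| + (1/√2)‖f''‖_{L²([0,1])})`. -/
theorem tent_fourier_coefficient_decay (f : ℝ → ℝ) (hf : ContDiff ℝ 2 f)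
    (k : ℤ) (hk : k ≠ 0) :
    ‖∫ x in (0:ℝ)..1, (f (|2*x - 1|) : ℂ) *
        Complex.exp (-2 * (Real.pi : ℂ) * Complex.I * (k : ℂ) * (x : ℂ))‖
      ≤ (1 / (Real.pi * (k:ℝ))^2) *
        (|deriv f 1| + |deriv f 0| +
          (1 / Real.sqrt 2) * Real.sqrt (∫ t in (0:ℝ)..1, (iteratedDeriv 2 f t)^2)) := by
  have h_deriv : ContDiff ℝ 1 (deriv f) := hf.deriv'
  have h_deriv2_ofReal : Continuous fun t ↦ ((deriv (deriv f) t : ℝ) : ℂ) :=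
    Complex.continuous_ofReal.comp h_deriv.continuous_deriv_one
  have h_memLp : MemLp (fun t ↦ ((deriv (deriv f) t : ℝ) : ℂ)) 2 (volume.restrict (Ioc 0 1)) :=
    (memLp_two_iff_integrable_sq_norm h_deriv2_ofReal.aestronglyMeasurable).2
      (h_deriv2_ofReal.norm.pow 2).integrableOn_Ioc
  have h_general := tent_fourier_coefficient_decay_general (f := fun t ↦ ((f t : ℝ) : ℂ))
    (f' := fun t ↦ ((deriv f t : ℝ) : ℂ))
    (Complex.continuous_ofReal.comp hf.continuous).continuousOn
    (Complex.continuous_ofReal.comp h_deriv.continuous).continuousOn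
    (fun t _ ↦ (hf.differentiable two_ne_zero t).hasDerivAt.ofReal_comp)
    (fun t _ ↦ (h_deriv.differentiable one_ne_zero t).hasDerivAt.ofReal_comp) h_memLp hk
  simpa [iteratedDeriv_succ, mul_comm] using h_general
end

section
/- Let f : ℝ → ℝ be twice continuously differentiable, let m ∈ ℤ and let k be a nonzero integer. Then ∫_0^1 f(|2x − 1| − m) e^{−2πi k x} dx = (1/(πk)²) · ( f'(1 − m) − (−1)^k f'(−m) − (−1)^{k(m+1)} ∫_{−m}^{1−m} f''(u) cos(πku) du ). -/
open scoped BigOperators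

/-!
Folding `[0, 1]` at its midpoint, where the tent has its kink, pairs the exponentials at
`1/2 ± u/2` into `2 (-1)^k cos (π k u)`, so the Fourier coefficient of a tent transformed function
is a cosine coefficient. Two integrations by parts then produce the second derivative; the first
boundary term vanishes because `sin (π k u)` is zero at integers. Translation by the integer `m`
multiplies `cos (π k u)` by `(-1)^(k m)`.
-/

open MeasureTheory Set

section IntegrationByParts

variable {E : Type*} [NormedAddCommGroup E] [NormedSpace ℝ E] [CompleteSpace E]
  {f f' f'' : ℝ → E} {a b c : ℝ}

theorem integral_cos_const_mul_smul (hc : c ≠ 0)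
    (hf : ∀ x ∈ uIcc a b, HasDerivWithinAt f (f' x) (uIcc a b) x)
    (hf' : IntervalIntegrable f' volume a b) :
    ∫ x in a..b, Real.cos (c * x) • f x =
      c⁻¹ • (Real.sin (c * b) • f b - Real.sin (c * a) • f a -
        ∫ x in a..b, Real.sin (c * x) • f' x) := by
  have hsin (x : ℝ) : HasDerivAt (fun x ↦ Real.sin (c * x)) (c * Real.cos (c * x)) x := by
    simpa [mul_comm] using ((hasDerivAt_id x).const_mul c).sin
  rw [eq_inv_smul_iff₀ hc, ← intervalIntegral.integral_smul,
    intervalIntegral.integral_smul_deriv_eq_deriv_smul_of_hasDerivWithinAt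
      (fun x _ ↦ (hsin x).hasDerivWithinAt) hf
      (Continuous.intervalIntegrable (by fun_prop) a b) hf', sub_sub_cancel]
  simp only [smul_smul]

theorem integral_sin_const_mul_smul (hc : c ≠ 0)
    (hf : ∀ x ∈ uIcc a b, HasDerivWithinAt f (f' x) (uIcc a b) x)
    (hf' : IntervalIntegrable f' volume a b) :
    ∫ x in a..b, Real.sin (c * x) • f x =
      c⁻¹ • (Real.cos (c * a) • f a - Real.cos (c * b) • f b +
        ∫ x in a..b, Real.cos (c * x) • f' x) := by
  have hcos (x : ℝ) : HasDerivAt (fun x ↦ Real.cos (c * x)) (-(c * Real.sin (c * x))) x := by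
    simpa [mul_comm] using ((hasDerivAt_id x).const_mul c).cos
  rw [eq_inv_smul_iff₀ hc, ← intervalIntegral.integral_smul,
    intervalIntegral.integral_smul_deriv_eq_deriv_smul_of_hasDerivWithinAt
      (fun x _ ↦ (hcos x).hasDerivWithinAt) hf
      (Continuous.intervalIntegrable (by fun_prop) a b) hf', ← add_sub_assoc,
    sub_add_sub_cancel, sub_self, zero_sub, ← intervalIntegral.integral_neg]
  simp only [smul_smul, neg_smul, neg_neg]

theorem integral_cos_const_mul_smul_of_sin_eq_zero (hc : c ≠ 0)
    (ha : Real.sin (c * a) = 0) (hb : Real.sin (c * b) = 0)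
    (hf : ∀ x ∈ uIcc a b, HasDerivWithinAt f (f' x) (uIcc a b) x)
    (hf' : ∀ x ∈ uIcc a b, HasDerivWithinAt f' (f'' x) (uIcc a b) x)
    (hf'' : IntervalIntegrable f'' volume a b) :
    ∫ x in a..b, Real.cos (c * x) • f x =
      (c ^ 2)⁻¹ • (Real.cos (c * b) • f' b - Real.cos (c * a) • f' a -
        ∫ x in a..b, Real.cos (c * x) • f'' x) := by
  have hf'_int : IntervalIntegrable f' volume a b :=
    ContinuousOn.intervalIntegrable fun x hx ↦ (hf' x hx).continuousWithinAt
  rw [integral_cos_const_mul_smul hc hf hf'_int, integral_sin_const_mul_smul hc hf' hf'', ha, hb]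
  module

end IntegrationByParts

section TentTransform

variable {E : Type*} [NormedAddCommGroup E]

theorem integral_sub_add_eq_integral_comp_sub_add_comp_add [NormedSpace ℝ E] {F : ℝ → E} {c r : ℝ}
    (hsub : IntervalIntegrable (fun t ↦ F (c - t)) volume 0 r)
    (hadd : IntervalIntegrable (fun t ↦ F (c + t)) volume 0 r) :
    ∫ x in c - r..c + r, F x = ∫ t in (0 : ℝ)..r, (F (c - t) + F (c + t)) := by
  have hleft : IntervalIntegrable F volume (c - r) c := by
    simpa using (hsub.comp_sub_left c).symm
  have hright : IntervalIntegrable F volume c (c + r) := by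
    simpa [add_comm] using hadd.comp_sub_right c
  rw [intervalIntegral.integral_add hsub hadd, intervalIntegral.integral_comp_sub_left,
    intervalIntegral.integral_comp_add_left, sub_zero, add_zero,
    intervalIntegral.integral_add_adjacent_intervals hleft hright]

/-- The univariate tent transform, taken on all of `ℝ` although only its restriction to `[0, 1]`
enters the Fourier coefficients. -/
noncomputable def tentTransform (x : ℝ) : ℝ := |2 * x - 1|

theorem tentTransform_half_sub {t : ℝ} (ht : 0 ≤ t) : tentTransform (1 / 2 - t) = 2 * t := by
  rw [tentTransform, abs_of_nonpos] <;> linarith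

theorem tentTransform_half_add {t : ℝ} (ht : 0 ≤ t) : tentTransform (1 / 2 + t) = 2 * t := by
  rw [tentTransform, abs_of_nonneg] <;> linarith

theorem exp_half_sub_add_exp_half_add (k : ℤ) (t : ℝ) :
    Complex.exp (-2 * Real.pi * Complex.I * k * (1 / 2 - t : ℝ)) +
      Complex.exp (-2 * Real.pi * Complex.I * k * (1 / 2 + t : ℝ)) =
      (-1) ^ k * (2 * Real.cos (Real.pi * k * (2 * t)) : ℝ) := by
  have hexp : Complex.exp (-(k * (Real.pi * Complex.I))) = (-1) ^ k := by
    rw [← mul_neg, Complex.exp_int_mul, Complex.exp_neg, Complex.exp_pi_mul_I, inv_neg_one]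
  push_cast
  rw [← hexp, Complex.two_cos, mul_add (Complex.exp _), ← Complex.exp_add, ← Complex.exp_add]
  ring_nf

variable [NormedSpace ℂ E]

theorem integral_exp_smul_comp_tentTransform (k : ℤ) {g : ℝ → E}
    (hg : IntervalIntegrable g volume 0 1) :
    ∫ x in (0 : ℝ)..1, Complex.exp (-2 * Real.pi * Complex.I * k * x) • g (tentTransform x) =
      (-1 : ℂ) ^ k • ∫ u in (0 : ℝ)..1, Real.cos (Real.pi * k * u) • g u := by
  set F : ℝ → E := fun x ↦
    Complex.exp (-2 * Real.pi * Complex.I * k * x) • g (tentTransform x) with hF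
  have hg_scaled : IntervalIntegrable (fun t ↦ g (2 * t)) volume 0 (1 / 2) := by
    simpa using hg.comp_mul_left (c := 2)
  have hF_sub (t : ℝ) (ht : 0 ≤ t) : F (1 / 2 - t) =
      Complex.exp (-2 * Real.pi * Complex.I * k * (1 / 2 - t : ℝ)) • g (2 * t) := by
    simp only [hF, tentTransform_half_sub ht]
  have hF_add (t : ℝ) (ht : 0 ≤ t) : F (1 / 2 + t) =
      Complex.exp (-2 * Real.pi * Complex.I * k * (1 / 2 + t : ℝ)) • g (2 * t) := by
    simp only [hF, tentTransform_half_add ht]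
  have hnonneg {t : ℝ} (ht : t ∈ uIoc 0 (1 / 2)) : 0 ≤ t := by
    rw [uIoc_of_le (by norm_num)] at ht
    exact ht.1.le
  calc ∫ x in (0 : ℝ)..1, F x
    _ = ∫ x in (1 / 2 - 1 / 2 : ℝ)..(1 / 2 + 1 / 2), F x := by norm_num
    _ = ∫ t in (0 : ℝ)..(1 / 2), (F (1 / 2 - t) + F (1 / 2 + t)) :=
      integral_sub_add_eq_integral_comp_sub_add_comp_add
        ((hg_scaled.continuousOn_smul (by fun_prop)).congr
          fun t ht ↦ (hF_sub t (hnonneg ht)).symm)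
        ((hg_scaled.continuousOn_smul (by fun_prop)).congr
          fun t ht ↦ (hF_add t (hnonneg ht)).symm)
    _ = ∫ t in (0 : ℝ)..(1 / 2),
          (-1 : ℂ) ^ k • (2 : ℝ) • Real.cos (Real.pi * k * (2 * t)) • g (2 * t) := by
      refine intervalIntegral.integral_congr_uIoo fun t ht ↦ ?_
      have ht_nonneg : 0 ≤ t := hnonneg (Ioo_subset_Ioc_self ht)
      simp only [hF_sub t ht_nonneg, hF_add t ht_nonneg, ← add_smul,
        exp_half_sub_add_exp_half_add, mul_smul, Complex.coe_smul]
    _ = (-1 : ℂ) ^ k • ∫ u in (0 : ℝ)..1, Real.cos (Real.pi * k * u) • g u := by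
      rw [intervalIntegral.integral_smul, intervalIntegral.integral_smul,
        intervalIntegral.smul_integral_comp_mul_left (fun u ↦ Real.cos (Real.pi * k * u) • g u)]
      norm_num

theorem integral_exp_smul_comp_tentTransform_of_hasDerivWithinAt [CompleteSpace E]
    {g g' g'' : ℝ → E} {k : ℤ} (hk : k ≠ 0)
    (hg : ∀ u ∈ Icc (0 : ℝ) 1, HasDerivWithinAt g (g' u) (Icc 0 1) u)
    (hg' : ∀ u ∈ Icc (0 : ℝ) 1, HasDerivWithinAt g' (g'' u) (Icc 0 1) u)
    (hg'' : IntervalIntegrable g'' volume 0 1) :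
    ∫ x in (0 : ℝ)..1, Complex.exp (-2 * Real.pi * Complex.I * k * x) • g (tentTransform x) =
      (1 / ((Real.pi : ℂ) * k) ^ 2) • (g' 1 - (-1 : ℂ) ^ k • g' 0 -
        (-1 : ℂ) ^ k • ∫ u in (0 : ℝ)..1, Real.cos (Real.pi * k * u) • g'' u) := by
  have hg_int : IntervalIntegrable g volume 0 1 :=
    ContinuousOn.intervalIntegrable_of_Icc zero_le_one fun u hu ↦ (hg u hu).continuousWithinAt
  have hπk : Real.pi * k ≠ 0 := mul_ne_zero Real.pi_ne_zero (Int.cast_ne_zero.mpr hk)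
  have hsin : Real.sin (Real.pi * k) = 0 := mul_comm Real.pi k ▸ Real.sin_int_mul_pi k
  have hcos : Real.cos (Real.pi * k) = (-1) ^ k := mul_comm Real.pi k ▸ Real.cos_int_mul_pi k
  have hsign : (-1 : ℂ) ^ k * (-1) ^ k = 1 := by
    rw [← mul_zpow, neg_one_mul, neg_neg, one_zpow]
  rw [← uIcc_of_le zero_le_one] at hg hg'
  rw [integral_exp_smul_comp_tentTransform k hg_int,
    integral_cos_const_mul_smul_of_sin_eq_zero hπk (by simp) (by simpa using hsin) hg hg' hg'']
  simp only [mul_one, mul_zero, hcos, Real.cos_zero, one_smul, ← Complex.coe_smul]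
  push_cast
  match_scalars
  · linear_combination ((Real.pi * k : ℂ) ^ 2)⁻¹ * hsign
  · ring
  · ring

end TentTransform

theorem hasDerivWithinAt_comp_sub_const {𝕜 E : Type*} [NontriviallyNormedField 𝕜]
    [NormedAddCommGroup E] [NormedSpace 𝕜 E] {f : 𝕜 → E} {f' : E} {s : Set 𝕜} (x a : 𝕜)
    (hf : HasDerivWithinAt f f' s (x - a)) :
    HasDerivWithinAt (fun x ↦ f (x - a)) f' ((· - a) ⁻¹' s) x := by
  simpa [Function.comp_def] using
    HasDerivWithinAt.scomp (h := (· - a)) x hf ((hasDerivWithinAt_id x _).sub_const a)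
      (mapsTo_preimage _ s)

theorem integral_cos_smul_comp_sub_intCast {E : Type*} [NormedAddCommGroup E] [NormedSpace ℝ E]
    (f : ℝ → E) (k m : ℤ) (a b : ℝ) :
    ∫ u in a..b, Real.cos (Real.pi * k * u) • f (u - m) =
      (-1 : ℝ) ^ (k * m) • ∫ u in (a - m)..(b - m), Real.cos (Real.pi * k * u) • f u := by
  have hcos (u : ℝ) : Real.cos (Real.pi * k * u) =
      (-1) ^ (k * m) * Real.cos (Real.pi * k * (u - m)) := by
    rw [← Real.cos_add_int_mul_pi]
    push_cast
    ring_nf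
  rw [← intervalIntegral.integral_comp_sub_right, ← intervalIntegral.integral_smul]
  exact intervalIntegral.integral_congr fun u _ ↦ by simp only [hcos u, mul_smul]

theorem tent_fourier_coefficient_shifted_general {E : Type*} [NormedAddCommGroup E]
    [NormedSpace ℂ E] [CompleteSpace E] {f f' f'' : ℝ → E} {m k : ℤ} (hk : k ≠ 0)
    (hf : ∀ u ∈ Icc (-m : ℝ) (1 - m), HasDerivWithinAt f (f' u) (Icc (-m) (1 - m)) u)
    (hf' : ∀ u ∈ Icc (-m : ℝ) (1 - m), HasDerivWithinAt f' (f'' u) (Icc (-m) (1 - m)) u)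
    (hf'' : IntervalIntegrable f'' volume (-m) (1 - m)) :
    ∫ x in (0 : ℝ)..1, Complex.exp (-2 * Real.pi * Complex.I * k * x) • f (|2 * x - 1| - m) =
      (1 / ((Real.pi : ℂ) * k) ^ 2) • (f' (1 - m) - (-1 : ℂ) ^ k • f' (-m) -
        (-1 : ℂ) ^ (k * (m + 1)) •
          ∫ u in (-m : ℝ)..(1 - m), Real.cos (Real.pi * k * u) • f'' u) := by
  have hpre : (fun u : ℝ ↦ u - m) ⁻¹' Icc (-m : ℝ) (1 - m) = Icc 0 1 := by simp
  have hshift {h h' : ℝ → E}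
      (hh : ∀ u ∈ Icc (-m : ℝ) (1 - m), HasDerivWithinAt h (h' u) (Icc (-m) (1 - m)) u) :
      ∀ u ∈ Icc (0 : ℝ) 1, HasDerivWithinAt (fun u ↦ h (u - m)) (h' (u - m)) (Icc 0 1) u := by
    rw [← hpre]
    exact fun u hu ↦ hasDerivWithinAt_comp_sub_const u m (hh _ hu)
  have hsign : (-1 : ℂ) ^ (k * (m + 1)) = (-1) ^ k * (-1) ^ (k * m) := by
    rw [← zpow_add₀ (neg_ne_zero.mpr one_ne_zero), mul_add, mul_one, add_comm]
  have hunit := integral_exp_smul_comp_tentTransform_of_hasDerivWithinAt hk (hshift hf)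
    (hshift hf') (by simpa using hf''.comp_sub_right m)
  rw [integral_cos_smul_comp_sub_intCast, zero_sub, ← Complex.coe_smul] at hunit
  push_cast [tentTransform] at hunit
  rwa [smul_smul, ← hsign] at hunit

/-- for `f ∈ C²(ℝ)`, `m ∈ ℤ` and `k ∈ ℤ \ {0}`,
`∫₀¹ f(|2x−1|−m)e^{−2πikx} dx = (1/(πk)²)(f'(1−m) − (−1)^k f'(−m)
− (−1)^{k(m+1)} ∫_{−m}^{1−m} f''(u)cos(πku) du)`. -/
theorem tent_fourier_coefficient_shifted (f : ℝ → ℝ) (hf : ContDiff ℝ 2 f)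
    (m : ℤ) (k : ℤ) (hk : k ≠ 0) :
    (∫ x in (0:ℝ)..1, (f (|2*x - 1| - (m:ℝ)) : ℂ) *
        Complex.exp (-2 * (Real.pi : ℂ) * Complex.I * (k : ℂ) * (x : ℂ)))
      = (1 / ((Real.pi : ℂ) * (k : ℂ))^2) *
          (Complex.ofReal (deriv f (1 - (m:ℝ)))
            - (-1 : ℂ)^k * Complex.ofReal (deriv f (-(m:ℝ)))
            - (-1 : ℂ)^(k*(m+1)) *
                Complex.ofReal (∫ u in (-(m:ℝ))..(1 - (m:ℝ)),
                    iteratedDeriv 2 f u * Real.cos (Real.pi * (k:ℝ) * u))) := by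
  have hderiv (u : ℝ) : HasDerivAt f (deriv f u) u :=
    (hf.differentiable two_ne_zero u).hasDerivAt
  have hderiv_two (u : ℝ) : HasDerivAt (deriv f) (iteratedDeriv 2 f u) u := by
    simpa [iteratedDeriv_succ] using (hf.differentiable_deriv_two u).hasDerivAt
  have hgeneral := tent_fourier_coefficient_shifted_general (m := m) hk
    (fun u _ ↦ (hderiv u).ofReal_comp.hasDerivWithinAt)
    (fun u _ ↦ (hderiv_two u).ofReal_comp.hasDerivWithinAt)
    ((Complex.continuous_ofReal.comp (hf.continuous_iteratedDeriv' 2)).intervalIntegrable _ _)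
  simpa only [smul_eq_mul, Complex.real_smul, ← Complex.ofReal_mul,
    intervalIntegral.integral_ofReal, mul_comm (Complex.exp _), mul_comm (Real.cos _)]
    using hgeneral
end

section
/- There exists a constant C > 0 such that for every twice continuously differentiable f : ℝ → ℝ with f and f'' square-integrable on ℝ, sup_{k∈ℤ} (1 + |k|)² ( Σ_{m∈ℤ} | ∫_0^1 f(|2x − 1| − m) e^{−2πi k x} dx |² )^{1/2} ≤ C ( ∫_ℝ f(t)² dt + ∫_ℝ f''(t)² dt )^{1/2}. -/
open scoped BigOperators ENNReal

/-!
Folding `[0, 1]` at `1/2` turns the `k`-th Fourier coefficient of `x ↦ g |2x - 1|` into `±` the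
cosine coefficient `∫₀¹ cos (πkt) g(t) dt`. Subtracting from `cos (πkt)` a cubic polynomial that is
bounded, with bounded second derivative, uniformly in `k` leaves a function that vanishes together
with its first derivative at `0` and `1`. Integrating by parts twice against that difference
produces no boundary terms, so `k²` times the coefficient is controlled by the `L²(0, 1)` norms of
`g` and `g''` alone.
For `g = f(· - m)` the squares of these local norms add up over `m ∈ ℤ` to those of `f` and `f''`
on `ℝ`.
-/

open MeasureTheory Set
open Real (cos sin)
open scoped Real

section Jensen

theorem norm_integral_pow_le_integral_norm_pow {α E : Type*} [MeasurableSpace α] {μ : Measure α}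
    [IsProbabilityMeasure μ] [NormedAddCommGroup E] [NormedSpace ℝ E] {f : α → E} {n : ℕ}
    (hf : Integrable f μ) (hfn : Integrable (fun x ↦ ‖f x‖ ^ n) μ) :
    ‖∫ x, f x ∂μ‖ ^ n ≤ ∫ x, ‖f x‖ ^ n ∂μ :=
  calc ‖∫ x, f x ∂μ‖ ^ n ≤ (∫ x, ‖f x‖ ∂μ) ^ n := by gcongr; exact norm_integral_le_integral_norm f
    _ ≤ ∫ x, ‖f x‖ ^ n ∂μ :=
      (convexOn_pow n).map_integral_le (continuous_pow n).continuousOn isClosed_Ici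
        (.of_forall fun x ↦ norm_nonneg (f x)) hf.norm hfn

theorem norm_intervalIntegral_zero_one_pow_le_of_norm_pow_le {E : Type*} [NormedAddCommGroup E]
    [NormedSpace ℝ E] {f : ℝ → E} {b : ℝ → ℝ} {n : ℕ} (hf : ContinuousOn f (Icc 0 1))
    (hb : IntervalIntegrable b volume 0 1) (hfb : ∀ t ∈ Icc (0 : ℝ) 1, ‖f t‖ ^ n ≤ b t) :
    ‖∫ t in (0 : ℝ)..1, f t‖ ^ n ≤ ∫ t in (0 : ℝ)..1, b t := by
  have : IsProbabilityMeasure (volume.restrict (Ioc (0 : ℝ) 1)) := ⟨by simp⟩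
  have hfn : ContinuousOn (fun t ↦ ‖f t‖ ^ n) (Icc 0 1) := hf.norm.pow n
  calc ‖∫ t in (0 : ℝ)..1, f t‖ ^ n ≤ ∫ t in (0 : ℝ)..1, ‖f t‖ ^ n := by
        simp only [intervalIntegral.integral_of_le zero_le_one]
        exact norm_integral_pow_le_integral_norm_pow
          (hf.integrableOn_Icc.mono_set Ioc_subset_Icc_self)
          (hfn.integrableOn_Icc.mono_set Ioc_subset_Icc_self)
    _ ≤ ∫ t in (0 : ℝ)..1, b t :=
        intervalIntegral.integral_mono_on zero_le_one
          (hfn.intervalIntegrable_of_Icc zero_le_one) hb hfb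

end Jensen

section CosineCoefficient

variable {E : Type*} [NormedAddCommGroup E] [NormedSpace ℝ E]

theorem integral_smul_deriv_deriv_eq_deriv_deriv_smul [CompleteSpace E] {a b : ℝ}
    {w w' w'' : ℝ → ℝ} {g g' g'' : ℝ → E}
    (hw : ∀ t ∈ uIcc a b, HasDerivAt w (w' t) t) (hw' : ∀ t ∈ uIcc a b, HasDerivAt w' (w'' t) t)
    (hg : ∀ t ∈ uIcc a b, HasDerivAt g (g' t) t) (hg' : ∀ t ∈ uIcc a b, HasDerivAt g' (g'' t) t)
    (hw'' : IntervalIntegrable w'' volume a b) (hg'' : IntervalIntegrable g'' volume a b)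
    (hwa : w a = 0) (hwb : w b = 0) (hwa' : w' a = 0) (hwb' : w' b = 0) :
    ∫ t in a..b, w t • g'' t = ∫ t in a..b, w'' t • g t := by
  have hw'_int : IntervalIntegrable w' volume a b :=
    ContinuousOn.intervalIntegrable fun t ht ↦ (hw' t ht).continuousAt.continuousWithinAt
  have hg'_int : IntervalIntegrable g' volume a b :=
    ContinuousOn.intervalIntegrable fun t ht ↦ (hg' t ht).continuousAt.continuousWithinAt
  calc ∫ t in a..b, w t • g'' t = -∫ t in a..b, w' t • g' t := by
        simp [intervalIntegral.integral_smul_deriv_eq_deriv_smul hw hg' hw'_int hg'', hwa, hwb]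
    _ = ∫ t in a..b, w'' t • g t := by
        simp [intervalIntegral.integral_smul_deriv_eq_deriv_smul hw' hg hw'' hg'_int, hwa', hwb']

/-- The cubic Hermite interpolant of `t ↦ cos (a * t)` at the nodes `0` and `1`, with slope `0` at
both nodes; these are the slopes of the cosine when `sin a = 0`. -/
noncomputable def cosHermite (a t : ℝ) : ℝ := 1 + (cos a - 1) * (3 * t ^ 2 - 2 * t ^ 3)

theorem hasDerivAt_cosHermite (a t : ℝ) :
    HasDerivAt (cosHermite a) ((cos a - 1) * (6 * t - 6 * t ^ 2)) t := by
  have h := ((((hasDerivAt_pow 2 t).const_mul 3).sub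
    ((hasDerivAt_pow 3 t).const_mul 2)).const_mul (cos a - 1)).const_add 1
  exact h.congr_deriv (by push_cast; ring)

@[fun_prop]
theorem continuous_cosHermite (a : ℝ) : Continuous (cosHermite a) :=
  continuous_iff_continuousAt.2 fun t ↦ (hasDerivAt_cosHermite a t).continuousAt

theorem hasDerivAt_deriv_cosHermite (a t : ℝ) :
    HasDerivAt (fun t ↦ (cos a - 1) * (6 * t - 6 * t ^ 2)) ((cos a - 1) * (6 - 12 * t)) t := by
  have h := (((hasDerivAt_id t).const_mul 6).sub
    ((hasDerivAt_pow 2 t).const_mul 6)).const_mul (cos a - 1)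
  exact h.congr_deriv (by push_cast; ring)

theorem abs_cosHermite_le_one (a : ℝ) {t : ℝ} (ht : t ∈ Icc 0 1) : |cosHermite a t| ≤ 1 := by
  obtain ⟨ht0, ht1⟩ := ht
  have hs0 : 0 ≤ 3 * t ^ 2 - 2 * t ^ 3 := by
    rw [show 3 * t ^ 2 - 2 * t ^ 3 = t ^ 2 * (3 - 2 * t) by ring]
    exact mul_nonneg (sq_nonneg t) (by linarith)
  have hs1 : 3 * t ^ 2 - 2 * t ^ 3 ≤ 1 := by
    rw [← sub_nonneg, show 1 - (3 * t ^ 2 - 2 * t ^ 3) = (1 - t) ^ 2 * (1 + 2 * t) by ring]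
    positivity
  have := Real.neg_one_le_cos a
  have := Real.cos_le_one a
  rw [cosHermite, abs_le]
  constructor <;> nlinarith

theorem abs_deriv_deriv_cosHermite_le (a : ℝ) {t : ℝ} (ht : t ∈ Icc 0 1) :
    |(cos a - 1) * (6 - 12 * t)| ≤ 12 := by
  have hcos : |cos a - 1| ≤ 2 := abs_le.2 ⟨by linarith [Real.neg_one_le_cos a],
    by linarith [Real.cos_le_one a]⟩
  have hlin : |6 - 12 * t| ≤ 6 := abs_le.2 ⟨by linarith [ht.2], by linarith [ht.1]⟩
  calc |(cos a - 1) * (6 - 12 * t)| = |cos a - 1| * |6 - 12 * t| := abs_mul _ _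
    _ ≤ 2 * 6 := by gcongr
    _ = 12 := by norm_num

theorem sq_smul_integral_cos_smul_s15 [CompleteSpace E] {a : ℝ} (ha : sin a = 0) {g : ℝ → E}
    (hg : ContDiff ℝ 2 g) :
    a ^ 2 • ∫ t in (0 : ℝ)..1, cos (a * t) • g t =
      ∫ t in (0 : ℝ)..1, ((cosHermite a t - cos (a * t)) • iteratedDeriv 2 g t
        - ((cos a - 1) * (6 - 12 * t)) • g t) := by
  have hat (t : ℝ) : HasDerivAt (fun t ↦ a * t) a t := by
    simpa using (hasDerivAt_id t).const_mul a
  have hw (t : ℝ) : HasDerivAt (fun t ↦ cosHermite a t - cos (a * t))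
      ((cos a - 1) * (6 * t - 6 * t ^ 2) + a * sin (a * t)) t :=
    ((hasDerivAt_cosHermite a t).sub (hat t).cos).congr_deriv (by ring)
  have hw' (t : ℝ) : HasDerivAt (fun t ↦ (cos a - 1) * (6 * t - 6 * t ^ 2) + a * sin (a * t))
      ((cos a - 1) * (6 - 12 * t) + a ^ 2 * cos (a * t)) t :=
    ((hasDerivAt_deriv_cosHermite a t).add ((hat t).sin.const_mul a)).congr_deriv (by ring)
  have hg' (t : ℝ) : HasDerivAt (deriv g) (iteratedDeriv 2 g t) t := by
    rw [iteratedDeriv_succ, iteratedDeriv_one]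
    exact (hg.differentiable_deriv_two t).hasDerivAt
  have by_parts := integral_smul_deriv_deriv_eq_deriv_deriv_smul (a := 0) (b := 1)
    (fun t _ ↦ hw t) (fun t _ ↦ hw' t)
    (fun t _ ↦ (hg.differentiable two_ne_zero t).hasDerivAt) (fun t _ ↦ hg' t)
    (Continuous.intervalIntegrable (by fun_prop) 0 1)
    (Continuous.intervalIntegrable (by fun_prop) 0 1)
    (by simp [cosHermite]) (by norm_num [cosHermite]) (by simp) (by simp [ha])
  rw [intervalIntegral.integral_sub (Continuous.intervalIntegrable (by fun_prop) 0 1)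
      (Continuous.intervalIntegrable (by fun_prop) 0 1), by_parts,
    ← intervalIntegral.integral_sub (Continuous.intervalIntegrable (by fun_prop) 0 1)
      (Continuous.intervalIntegrable (by fun_prop) 0 1), ← intervalIntegral.integral_smul]
  simp only [add_smul, add_sub_cancel_left, mul_smul (a ^ 2)]

theorem norm_smul_sub_smul_sq_le (u v : ℝ) (x y : E) :
    ‖u • x - v • y‖ ^ 2 ≤ (u ^ 2 + v ^ 2) * (‖x‖ ^ 2 + ‖y‖ ^ 2) :=
  calc ‖u • x - v • y‖ ^ 2 ≤ (|u| * ‖x‖ + |v| * ‖y‖) ^ 2 := by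
        gcongr
        simpa only [norm_smul, Real.norm_eq_abs] using norm_sub_le (u • x) (v • y)
    _ ≤ (|u| ^ 2 + |v| ^ 2) * (‖x‖ ^ 2 + ‖y‖ ^ 2) := by
        linarith [sq_nonneg (|u| * ‖y‖ - |v| * ‖x‖)]
    _ = (u ^ 2 + v ^ 2) * (‖x‖ ^ 2 + ‖y‖ ^ 2) := by simp only [sq_abs]

theorem norm_sq_smul_integral_cos_smul_sq_le [CompleteSpace E] {a : ℝ} (ha : sin a = 0)
    {g : ℝ → E} (hg : ContDiff ℝ 2 g) :
    ‖a ^ 2 • ∫ t in (0 : ℝ)..1, cos (a * t) • g t‖ ^ 2 ≤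
      13 ^ 2 * ∫ t in (0 : ℝ)..1, (‖g t‖ ^ 2 + ‖iteratedDeriv 2 g t‖ ^ 2) := by
  rw [sq_smul_integral_cos_smul_s15 ha hg, ← intervalIntegral.integral_const_mul]
  refine norm_intervalIntegral_zero_one_pow_le_of_norm_pow_le
    (Continuous.continuousOn (by fun_prop)) (Continuous.intervalIntegrable (by fun_prop) 0 1)
    fun t ht ↦ ?_
  have hw : |cosHermite a t - cos (a * t)| ≤ 2 :=
    (abs_sub _ _).trans (by linarith [abs_cosHermite_le_one a ht, Real.abs_cos_le_one (a * t)])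
  have hw_sq : (cosHermite a t - cos (a * t)) ^ 2 ≤ 2 ^ 2 := sq_le_sq.2 (by simpa using hw)
  have hH_sq : ((cos a - 1) * (6 - 12 * t)) ^ 2 ≤ 12 ^ 2 :=
    sq_le_sq.2 (by simpa using abs_deriv_deriv_cosHermite_le a ht)
  refine (norm_smul_sub_smul_sq_le _ _ _ _).trans ?_
  rw [add_comm (‖g t‖ ^ 2)]
  gcongr
  linarith

theorem one_add_abs_intCast_le_abs_pi_mul {k : ℤ} (hk : k ≠ 0) :
    1 + |(k : ℝ)| ≤ |π * k| := by
  have hk1 : 1 ≤ |(k : ℝ)| := by exact_mod_cast Int.one_le_abs hk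
  rw [abs_mul, abs_of_pos Real.pi_pos]
  nlinarith [Real.pi_gt_three]

theorem one_add_abs_sq_mul_norm_integral_cos_smul_sq_le [CompleteSpace E] {g : ℝ → E}
    (hg : ContDiff ℝ 2 g) (k : ℤ) :
    ((1 + |(k : ℝ)|) ^ 2 * ‖∫ t in (0 : ℝ)..1, cos (π * k * t) • g t‖) ^ 2 ≤
      13 ^ 2 * ∫ t in (0 : ℝ)..1, (‖g t‖ ^ 2 + ‖iteratedDeriv 2 g t‖ ^ 2) := by
  rcases eq_or_ne k 0 with rfl | hk
  · simp only [Int.cast_zero, abs_zero, add_zero, one_pow, one_mul, mul_zero, zero_mul,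
      Real.cos_zero, one_smul]
    rw [← intervalIntegral.integral_const_mul]
    refine norm_intervalIntegral_zero_one_pow_le_of_norm_pow_le hg.continuous.continuousOn
      (Continuous.intervalIntegrable (by fun_prop) 0 1) fun t _ ↦ ?_
    linarith [sq_nonneg ‖g t‖, sq_nonneg ‖iteratedDeriv 2 g t‖]
  · have hsin : sin (π * k) = 0 := by rw [mul_comm, Real.sin_int_mul_pi]
    refine le_trans ?_ (norm_sq_smul_integral_cos_smul_sq_le hsin hg)
    rw [norm_smul, Real.norm_of_nonneg (sq_nonneg _), ← sq_abs (π * k)]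
    gcongr
    exact one_add_abs_intCast_le_abs_pi_mul hk

end CosineCoefficient

section TentTransform

theorem intervalIntegral_zero_one_eq_integral_fold {E : Type*} [NormedAddCommGroup E]
    [NormedSpace ℝ E] {h : ℝ → E} (hh : Continuous h) :
    ∫ x in (0 : ℝ)..1, h x =
      ∫ t in (0 : ℝ)..1, (2⁻¹ : ℝ) • (h (1 / 2 + t / 2) + h (1 / 2 - t / 2)) := by
  rw [intervalIntegral.integral_smul,
    intervalIntegral.integral_add (Continuous.intervalIntegrable (by fun_prop) 0 1)
      (Continuous.intervalIntegrable (by fun_prop) 0 1),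
    intervalIntegral.integral_comp_add_div h two_ne_zero,
    intervalIntegral.integral_comp_sub_div h two_ne_zero, ← smul_add,
    inv_smul_smul₀ two_ne_zero, add_comm]
  norm_num [intervalIntegral.integral_add_adjacent_intervals, hh.intervalIntegrable]

variable {E : Type*} [NormedAddCommGroup E] [NormedSpace ℂ E]

/-- The `k`-th Fourier coefficient of the `1`-periodic extension of `g` composed with the tent
transform `x ↦ |2x - 1|`. -/
noncomputable def tentFourierCoeff (g : ℝ → E) (k : ℤ) : E :=
  ∫ x in (0 : ℝ)..1, Complex.exp (-2 * π * Complex.I * k * x) • g |2 * x - 1|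

theorem exp_fold_add_exp_fold (k : ℤ) (t : ℝ) :
    Complex.exp (-2 * π * Complex.I * k * ↑(1 / 2 + t / 2)) +
      Complex.exp (-2 * π * Complex.I * k * ↑(1 / 2 - t / 2)) =
      2 * (-1) ^ k * cos (π * k * t) := by
  have hplus : -2 * π * Complex.I * k * ↑(1 / 2 + t / 2) =
      k * (-(π * Complex.I)) + -(π * k * t : ℝ) * Complex.I := by push_cast; ring
  have hminus : -2 * π * Complex.I * k * ↑(1 / 2 - t / 2) =
      k * (-(π * Complex.I)) + (π * k * t : ℝ) * Complex.I := by push_cast; ring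
  have hneg_one : Complex.exp (k * (-(π * Complex.I))) = (-1) ^ k := by
    rw [Complex.exp_int_mul, Complex.exp_neg, Complex.exp_pi_mul_I, inv_neg_one]
  rw [hplus, hminus, Complex.exp_add, Complex.exp_add, hneg_one, Complex.ofReal_cos,
    ← mul_add, add_comm, ← Complex.two_cos]
  ring

theorem tentFourierCoeff_eq_neg_one_zpow_smul {g : ℝ → E} (hg : Continuous g) (k : ℤ) :
    tentFourierCoeff g k = (-1 : ℂ) ^ k • ∫ t in (0 : ℝ)..1, cos (π * k * t) • g t := by
  rw [tentFourierCoeff, intervalIntegral_zero_one_eq_integral_fold (by fun_prop),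
    ← intervalIntegral.integral_smul]
  refine intervalIntegral.integral_congr fun t ht ↦ ?_
  have ht0 : 0 ≤ t := (uIcc_of_le (zero_le_one' ℝ) ▸ ht).1
  have hright : |2 * (1 / 2 + t / 2) - 1| = t := by
    rw [show 2 * (1 / 2 + t / 2) - 1 = t by ring, abs_of_nonneg ht0]
  have hleft : |2 * (1 / 2 - t / 2) - 1| = t := by
    rw [show 2 * (1 / 2 - t / 2) - 1 = -t by ring, abs_neg, abs_of_nonneg ht0]
  simp only [hright, hleft]
  rw [← add_smul, exp_fold_add_exp_fold, ← Complex.coe_smul, ← Complex.coe_smul, smul_smul,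
    smul_smul]
  congr 1
  push_cast
  ring

theorem norm_tentFourierCoeff {g : ℝ → E} (hg : Continuous g) (k : ℤ) :
    ‖tentFourierCoeff g k‖ = ‖∫ t in (0 : ℝ)..1, cos (π * k * t) • g t‖ := by
  simp [tentFourierCoeff_eq_neg_one_zpow_smul hg, norm_smul]

end TentTransform

section Summation

theorem hasSum_intervalIntegral_comp_sub_intCast {E : Type*} [NormedAddCommGroup E]
    [NormedSpace ℝ E] {f : ℝ → E} (hf : Integrable f) :
    HasSum (fun m : ℤ ↦ ∫ t in (0 : ℝ)..1, f (t - m)) (∫ t, f t) := by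
  simpa [Function.comp_def, sub_eq_add_neg] using
    (Equiv.neg ℤ).hasSum_iff.2 hf.hasSum_intervalIntegral_comp_add_int

theorem ofReal_mul_tsum_ofReal_sq_rpow_half_le {ι : Type*} {A C S : ℝ} {b c : ι → ℝ}
    (hA : 0 ≤ A) (hC : 0 ≤ C) (hb : HasSum b S) (hcb : ∀ i, (A * c i) ^ 2 ≤ C ^ 2 * b i) :
    ENNReal.ofReal A * (∑' i, ENNReal.ofReal (c i ^ 2)) ^ (1 / 2 : ℝ) ≤
      ENNReal.ofReal (C * √S) := by
  have hb' := hb.mul_left (C ^ 2)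
  have hb_nonneg (i : ι) : 0 ≤ C ^ 2 * b i := (sq_nonneg _).trans (hcb i)
  have hS : 0 ≤ C ^ 2 * S := hb'.nonneg hb_nonneg
  have hsum : ENNReal.ofReal A ^ 2 * ∑' i, ENNReal.ofReal (c i ^ 2) ≤
      ENNReal.ofReal (C ^ 2 * S) := by
    rw [← ENNReal.ofReal_pow hA, ← ENNReal.tsum_mul_left, ← hb'.tsum_eq,
      ENNReal.ofReal_tsum_of_nonneg hb_nonneg hb'.summable]
    gcongr with i
    rw [← ENNReal.ofReal_mul (sq_nonneg A), ← mul_pow]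
    exact ENNReal.ofReal_le_ofReal (hcb i)
  calc ENNReal.ofReal A * (∑' i, ENNReal.ofReal (c i ^ 2)) ^ (1 / 2 : ℝ)
      = (ENNReal.ofReal A ^ 2 * ∑' i, ENNReal.ofReal (c i ^ 2)) ^ (1 / 2 : ℝ) := by
        rw [ENNReal.mul_rpow_of_nonneg _ _ (by norm_num), ← ENNReal.rpow_natCast,
          ← ENNReal.rpow_mul]
        norm_num
    _ ≤ ENNReal.ofReal (C ^ 2 * S) ^ (1 / 2 : ℝ) := by gcongr
    _ = ENNReal.ofReal (C * √S) := by
        rw [ENNReal.ofReal_rpow_of_nonneg hS (by norm_num), ← Real.sqrt_eq_rpow,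
          Real.sqrt_mul (sq_nonneg C), Real.sqrt_sq hC]

end Summation

theorem iteratedDeriv_clm_comp {𝕜 F G : Type*} [NontriviallyNormedField 𝕜]
    [NormedAddCommGroup F] [NormedSpace 𝕜 F] [NormedAddCommGroup G] [NormedSpace 𝕜 G]
    (L : F →L[𝕜] G) {f : 𝕜 → F} {x : 𝕜} {n : ℕ} (hf : ContDiffAt 𝕜 n f x) :
    iteratedDeriv n (L ∘ f) x = L (iteratedDeriv n f x) := by
  rw [iteratedDeriv, L.iteratedFDeriv_comp_left hf le_rfl]
  rfl

theorem E2_norm_le_H2_norm_general {E : Type*} [NormedAddCommGroup E] [NormedSpace ℂ E]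
    [CompleteSpace E] {f : ℝ → E} (hf : ContDiff ℝ 2 f) (hf0 : Integrable fun t ↦ ‖f t‖ ^ 2)
    (hf2 : Integrable fun t ↦ ‖iteratedDeriv 2 f t‖ ^ 2) (k : ℤ) :
    ENNReal.ofReal ((1 + |(k : ℝ)|) ^ 2) *
        (∑' m : ℤ, ENNReal.ofReal (‖tentFourierCoeff (fun t ↦ f (t - m)) k‖ ^ 2)) ^ (1 / 2 : ℝ) ≤
      ENNReal.ofReal (13 * √((∫ t, ‖f t‖ ^ 2) + ∫ t, ‖iteratedDeriv 2 f t‖ ^ 2)) := by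
  rw [← integral_add hf0 hf2]
  refine ofReal_mul_tsum_ofReal_sq_rpow_half_le (by positivity) (by norm_num)
    (hasSum_intervalIntegral_comp_sub_intCast (hf0.add hf2)) fun m ↦ ?_
  have hfm : ContDiff ℝ 2 fun t ↦ f (t - m) := hf.comp (contDiff_id.sub contDiff_const)
  simpa only [norm_tentFourierCoeff hfm.continuous, iteratedDeriv_comp_sub_const] using
    one_add_abs_sq_mul_norm_integral_cos_smul_sq_le hfm k

/-- one-dimensional `E²(ℝ)` embedding: there is `C > 0` such that for all
`f ∈ C²(ℝ)` with `f, f'' ∈ L²(ℝ)`,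
`sup_{k∈ℤ} (1+|k|)² (Σ_{m∈ℤ} |∫₀¹ f(|2x−1|−m)e^{−2πikx} dx|²)^{1/2}
≤ C (∫_ℝ f² + ∫_ℝ f''²)^{1/2}` (the inner sum taken in `[0,∞]`). -/
theorem E2_norm_le_H2_norm :
    ∃ C : ℝ, 0 < C ∧ ∀ f : ℝ → ℝ, ContDiff ℝ 2 f →
      MeasureTheory.Integrable (fun t => f t ^ 2) →
      MeasureTheory.Integrable (fun t => (iteratedDeriv 2 f t)^2) →
      ∀ k : ℤ,
        ENNReal.ofReal ((1 + |(k:ℝ)|)^2) *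
            (∑' m : ℤ, ENNReal.ofReal
              (‖∫ x in (0:ℝ)..1, (f (|2*x - 1| - (m:ℝ)) : ℂ) *
                  Complex.exp (-2 * (Real.pi : ℂ) * Complex.I * (k : ℂ) * (x : ℂ))‖^2))
                ^ (1/2 : ℝ)
          ≤ ENNReal.ofReal
              (C * Real.sqrt ((∫ t : ℝ, f t ^ 2) + ∫ t : ℝ, (iteratedDeriv 2 f t)^2)) := by
  refine ⟨13, by norm_num, fun f hf hf0 hf2 k ↦ ?_⟩
  have hf2_coe (t : ℝ) : iteratedDeriv 2 (fun t ↦ (f t : ℂ)) t = iteratedDeriv 2 f t :=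
    iteratedDeriv_clm_comp Complex.ofRealCLM hf.contDiffAt
  simpa [tentFourierCoeff, hf2_coe, mul_comm] using
    E2_norm_le_H2_norm_general (f := fun t ↦ (f t : ℂ)) (Complex.ofRealCLM.contDiff.comp hf)
      (by simpa using hf0) (by simpa [hf2_coe] using hf2) k
end
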